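/- arXiv:1003.1587 — 2 statements merged into one kernel-verified Lean document; each statement's English description precedes it below -/
import Mathlib

section
/- For every α≥1 there exists a constant D≥1 with the following property. Let X be a complex Banach space having property (α) with constant at most α. Then for all integers m,n≥1, every matrix a = [a_{ij}]_{1≤i,j≤n} with entries a_{ij}∈M_m(ℂ) whose operator norm as an element of M_{nm}(ℂ) is at most 1, and all vectors x_{jl}∈X (1≤j≤n, 1≤l≤m): (2^{-(n+m)} Σ_{ε∈{±1}^n} Σ_{η∈{±1}^m} ‖Σ_{i,j=1}^n Σ_{k,l=1}^m ε_i η_k (a_{ij})_{kl} x_{jl}‖²)^{1/2} ≤ D·(2^{-(n+m)} Σ_{ε,η} ‖Σ_{j=1}^n Σ_{l=1}^m ε_j η_l x_{jl}‖²)^{1/2}. (This says that the canonical homomorphisms σ_{m,X}: M_m(ℂ)→B(Rad_m(X)), σ_{m,X}(a)=a⊗Id_X, are matricially R-bounded uniformly in m.) -/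
noncomputable section

/-- The sign `±1` (as a complex scalar) associated to a boolean. -/
def sgn (b : Bool) : ℂ := if b then 1 else -1

/-- Rademacher average `(2^{-n} Σ_{ε ∈ {±1}^n} ‖Σ_k ε_k x_k‖²)^{1/2}`. -/
def radNorm {X : Type*} [NormedAddCommGroup X] [NormedSpace ℂ X] {n : ℕ}
    (x : Fin n → X) : ℝ :=
  Real.sqrt ((∑ ε : Fin n → Bool, ‖∑ k, sgn (ε k) • x k‖ ^ 2) / 2 ^ n)

/-- Doubly indexed Rademacher average
`(2^{-n-m} Σ_{ε ∈ {±1}^n, η ∈ {±1}^m} ‖Σ_{i,j} ε_i η_j x_{ij}‖²)^{1/2}`. -/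
def radNorm2 {X : Type*} [NormedAddCommGroup X] [NormedSpace ℂ X] {n m : ℕ}
    (x : Fin n → Fin m → X) : ℝ :=
  Real.sqrt ((∑ ε : Fin n → Bool, ∑ η : Fin m → Bool,
    ‖∑ i, ∑ j, (sgn (ε i) * sgn (η j)) • x i j‖ ^ 2) / 2 ^ (n + m))

/-- `X` has property (α) with constant `α`. -/
def PropAlphaWith (X : Type*) [NormedAddCommGroup X] [NormedSpace ℂ X]
    (α : ℝ) : Prop :=
  ∀ (n m : ℕ) (x : Fin n → Fin m → X) (t : Fin n → Fin m → ℂ),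
    (∀ i j, ‖t i j‖ ≤ 1) →
      radNorm2 (fun i j => t i j • x i j) ≤ α * radNorm2 x

/-- The operator norm of a complex matrix, acting on the finite dimensional
ℓ²-space. -/
def matOpNorm {p : Type*} [Fintype p] [DecidableEq p] (a : Matrix p p ℂ) : ℝ :=
  ‖Matrix.toEuclideanCLM (𝕜 := ℂ) a‖

set_option linter.unusedSectionVars false

namespace SigmaAlpha

open MeasureTheory ProbabilityTheory Filter Topology

variable {X : Type*} [NormedAddCommGroup X] [NormedSpace ℂ X]
variable {ι κ : Type*} [Fintype ι] [Fintype κ] [DecidableEq ι] [DecidableEq κ]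

def S1 (y : ι → X) : ℝ :=
  (∑ ε : ι → Bool, ‖∑ j, sgn (ε j) • y j‖ ^ 2) / 2 ^ (Fintype.card ι)

def S2 (x : ι → κ → X) : ℝ :=
  (∑ ε : ι → Bool, ∑ η : κ → Bool,
    ‖∑ i, ∑ j, (sgn (ε i) * sgn (η j)) • x i j‖ ^ 2) / 2 ^ (Fintype.card ι + Fintype.card κ)

lemma S1_nonneg (y : ι → X) : 0 ≤ S1 y := by unfold S1; positivity

lemma S2_nonneg (x : ι → κ → X) : 0 ≤ S2 x := by unfold S2; positivity

lemma sgn_beq (a b : Bool) : sgn (a == b) = sgn a * sgn b := by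
  cases a <;> cases b <;> simp [sgn]

lemma norm_sgn (a : Bool) : ‖sgn a‖ = 1 := by cases a <;> simp [sgn]

lemma sgn_mul_self (a : Bool) : sgn a * sgn a = 1 := by cases a <;> simp [sgn]

def flipE (δ : ι → Bool) : (ι → Bool) ≃ (ι → Bool) where
  toFun ω := fun i => (ω i == δ i)
  invFun ω := fun i => (ω i == δ i)
  left_inv ω := by funext i; cases h : ω i <;> cases h' : δ i <;> simp [h, h']
  right_inv ω := by funext i; cases h : ω i <;> cases h' : δ i <;> simp [h, h']

lemma S1_sgn (δ : ι → Bool) (y : ι → X) : S1 (fun j => sgn (δ j) • y j) = S1 y := by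
  unfold S1
  congr 1
  refine Fintype.sum_equiv (flipE δ) _ _ fun ω => ?_
  simp [flipE, sgn_beq, smul_smul]

lemma S2_reindex {ι' κ' : Type*} [Fintype ι'] [Fintype κ'] [DecidableEq ι'] [DecidableEq κ']
    (e : ι ≃ ι') (f : κ ≃ κ') (x : ι' → κ' → X) :
    S2 (fun i j => x (e i) (f j)) = S2 x := by
  unfold S2
  rw [Fintype.card_congr e, Fintype.card_congr f]
  congr 1
  refine Fintype.sum_equiv (Equiv.arrowCongr e (Equiv.refl _)) _ _ fun ε => ?_
  refine Fintype.sum_equiv (Equiv.arrowCongr f (Equiv.refl _)) _ _ fun η => ?_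
  congr 2
  refine Fintype.sum_equiv e _ _ fun i => ?_
  refine Fintype.sum_equiv f _ _ fun j => ?_
  simp

lemma S1_reindex {ι' : Type*} [Fintype ι'] [DecidableEq ι']
    (e : ι ≃ ι') (x : ι' → X) : S1 (fun i => x (e i)) = S1 x := by
  unfold S1
  rw [Fintype.card_congr e]
  congr 1
  refine Fintype.sum_equiv (Equiv.arrowCongr e (Equiv.refl _)) _ _ fun ε => ?_
  congr 2
  refine Fintype.sum_equiv e _ _ fun i => ?_
  simp

lemma radNorm2_eq {n m : ℕ} (x : Fin n → Fin m → X) : radNorm2 x = √(S2 x) := by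
  simp [radNorm2, S2]

lemma propAlpha {α : ℝ} (_hα : 1 ≤ α) (h : PropAlphaWith X α) (x : ι → κ → X)
    (t : ι → κ → ℂ) (ht : ∀ i j, ‖t i j‖ ≤ 1) :
    S2 (fun i j => t i j • x i j) ≤ α ^ 2 * S2 x := by
  let e := (Fintype.equivFin ι).symm
  let f := (Fintype.equivFin κ).symm
  have := h _ _ (fun i j => x (e i) (f j)) (fun i j => t (e i) (f j)) (fun i j => ht _ _)
  rw [radNorm2_eq, radNorm2_eq, S2_reindex e f x,
    S2_reindex e f (fun i j => t i j • x i j)] at this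
  have h2 := pow_le_pow_left₀ (Real.sqrt_nonneg _) this 2
  rwa [Real.sq_sqrt (S2_nonneg _), mul_pow, Real.sq_sqrt (S2_nonneg _)] at h2

/-- averaging identity -/
lemma avg_S2 (x : ι → κ → X) :
    (∑ ω : ι × κ → Bool, S2 (fun i j => sgn (ω (i, j)) • x i j)) / 2 ^ (Fintype.card (ι × κ))
      = S1 (fun p : ι × κ => x p.1 p.2) := by
  unfold S2
  rw [← Finset.sum_div, Finset.sum_comm]
  have : ∀ ε : ι → Bool, (∑ ω : ι × κ → Bool, ∑ η : κ → Bool,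
      ‖∑ i, ∑ j, (sgn (ε i) * sgn (η j)) • sgn (ω (i, j)) • x i j‖ ^ 2)
      = 2 ^ Fintype.card κ * (2 ^ (Fintype.card (ι × κ)) * S1 (fun p : ι × κ => x p.1 p.2)) := by
    intro ε
    rw [Finset.sum_comm]
    have h1 : ∀ η : κ → Bool, (∑ ω : ι × κ → Bool,
        ‖∑ i, ∑ j, (sgn (ε i) * sgn (η j)) • sgn (ω (i, j)) • x i j‖ ^ 2)
        = 2 ^ (Fintype.card (ι × κ)) * S1 (fun p : ι × κ => x p.1 p.2) := by
      intro η
      rw [← S1_sgn (fun p : ι × κ => (ε p.1 == η p.2))]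
      unfold S1
      rw [mul_div_cancel₀ _ (by positivity)]
      refine Finset.sum_congr rfl fun ω _ => ?_
      rw [Fintype.sum_prod_type]
      simp only [sgn_beq, smul_smul, mul_comm]
    simp [h1]
  simp only [this]
  simp only [Finset.sum_const, Finset.card_univ, Fintype.card_pi, Fintype.card_bool,
    Finset.prod_const, nsmul_eq_mul]
  push_cast
  rw [pow_add]
  field_simp

lemma sum_const_bool (c : ℝ) :
    (∑ _ω : ι → Bool, c) / 2 ^ (Fintype.card ι) = c := by
  simp

lemma S1_le_S2 {α : ℝ} (hα : 1 ≤ α) (h : PropAlphaWith X α) (x : ι → κ → X) :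
    S1 (fun p : ι × κ => x p.1 p.2) ≤ α ^ 2 * S2 x := by
  rw [← avg_S2, ← sum_const_bool (ι := ι × κ) (α ^ 2 * S2 x)]
  gcongr with ω
  exact propAlpha hα h x (fun i j => sgn (ω (i, j))) (fun i j => (norm_sgn _).le)

lemma S2_le_S1 {α : ℝ} (hα : 1 ≤ α) (h : PropAlphaWith X α) (x : ι → κ → X) :
    S2 x ≤ α ^ 2 * S1 (fun p : ι × κ => x p.1 p.2) := by
  rw [← avg_S2, ← sum_const_bool (ι := ι × κ) (S2 x), ← mul_div_assoc, Finset.mul_sum]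
  gcongr with ω
  have := propAlpha hα h (fun i j => sgn (ω (i, j)) • x i j)
    (fun i j => sgn (ω (i, j))) (fun i j => (norm_sgn _).le)
  simpa [smul_smul, sgn_mul_self] using this

def rs (b : Bool) : ℝ := if b then 1 else -1

lemma rs_coe (b : Bool) : ((rs b : ℝ) : ℂ) = sgn b := by cases b <;> simp [rs, sgn]

lemma sum_rs_mul (k l : ι) (hkl : k ≠ l) : ∑ ε : ι → Bool, rs (ε k) * rs (ε l) = 0 := by
  have h : ∑ ε : ι → Bool, rs (ε k) * rs (ε l) = ∑ ε : ι → Bool, -(rs (ε k) * rs (ε l)) := by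
    refine Fintype.sum_equiv (flipE (fun i => !decide (i = k))) _ _ fun ε => ?_
    simp only [flipE, Equiv.coe_fn_mk, decide_true, Ne.symm hkl, decide_false]
    cases ε k <;> cases ε l <;> simp [rs]
  rw [Finset.sum_neg_distrib] at h
  linarith

lemma sum_rs_sq : ∑ ε : ι → Bool, (∑ k, rs (ε k)) ^ 2
    = Fintype.card ι * 2 ^ (Fintype.card ι) := by
  simp only [pow_two (∑ k, rs _), Finset.sum_mul_sum]
  rw [Finset.sum_comm]
  have : ∀ k : ι, ∑ ε : ι → Bool, ∑ l, rs (ε k) * rs (ε l) = 2 ^ (Fintype.card ι) := by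
    intro k
    rw [Finset.sum_comm, Finset.sum_eq_single k]
    · have : ∀ b, rs b * rs b = 1 := by intro b; cases b <;> simp [rs]
      simp [this]
    · intro l _ hl
      exact sum_rs_mul k l hl.symm
    · simp
  simp [this]

lemma S2_const (y : κ → X) : S2 (fun (_ : ι) j => y j) = Fintype.card ι * S1 y := by
  unfold S2 S1
  have : ∀ (ε : ι → Bool) (η : κ → Bool),
      ‖∑ i, ∑ j, (sgn (ε i) * sgn (η j)) • y j‖ ^ 2
        = (∑ k, rs (ε k)) ^ 2 * ‖∑ j, sgn (η j) • y j‖ ^ 2 := by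
    intro ε η
    simp only [mul_smul, ← Finset.smul_sum, ← Finset.sum_smul]
    rw [norm_smul, mul_pow]
    congr 1
    simp only [← rs_coe, ← Complex.ofReal_sum]
    rw [Complex.norm_real, Real.norm_eq_abs, sq_abs]
  simp only [this, ← Finset.sum_mul_sum, sum_rs_sq]
  rw [pow_add]
  field_simp

lemma S1_const_le {α : ℝ} (hα : 1 ≤ α) (h : PropAlphaWith X α) (y : κ → X) (ι : Type*)
    [Fintype ι] [DecidableEq ι] :
    S1 (fun p : ι × κ => y p.2) ≤ α ^ 2 * (Fintype.card ι * S1 y) := by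
  rw [← S2_const]
  exact S1_le_S2 hα h (fun (_ : ι) j => y j)

def bet : Measure Bool := (PMF.uniformOfFintype Bool).toMeasure

instance : IsProbabilityMeasure bet := by unfold bet; infer_instance

lemma bet_singleton (b : Bool) : bet {b} = 2⁻¹ := by
  unfold bet
  rw [PMF.toMeasure_apply_singleton _ _ (MeasurableSet.singleton _)]
  simp

lemma measurable_rs : Measurable rs := by
  unfold rs; exact measurable_of_countable _

def muK (K : ℕ) : Measure ℝ :=
  (Measure.pi (fun _ : Fin K => bet)).map (fun ω => (√K)⁻¹ * ∑ k, rs (ω k))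

lemma meas_aux (K : ℕ) : Measurable (fun ω : Fin K → Bool => (√K)⁻¹ * ∑ k, rs (ω k)) :=
  measurable_of_countable _

instance (K : ℕ) : IsProbabilityMeasure (muK K) :=
  Measure.isProbabilityMeasure_map (meas_aux K).aemeasurable

lemma charFun_muK (K : ℕ) (t : ℝ) :
    charFun (muK K) t = (charFun (bet.map rs) ((√K)⁻¹ * t)) ^ K := by
  have : IsProbabilityMeasure (bet.map rs) :=
    Measure.isProbabilityMeasure_map measurable_rs.aemeasurable
  unfold muK
  rw [charFun_map_mul_comp (measurable_of_countable _).aemeasurable]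
  have h1 : (Measure.pi (fun _ : Fin K => bet)).map (fun ω => ∑ k, rs (ω k))
      = (Measure.pi (fun _ : Fin K => bet.map rs)).map (fun p => ∑ i, p i) := by
    rw [← Measure.pi_map_pi (fun _ => measurable_rs.aemeasurable),
      Measure.map_map (by fun_prop) (measurable_of_countable _)]
    rfl
  rw [h1, charFun_map_sum_pi_eq_prod]
  simp

def muKP (K : ℕ) : ProbabilityMeasure ℝ := ⟨muK K, inferInstance⟩

def gauP : ProbabilityMeasure ℝ := ⟨gaussianReal 0 1, inferInstance⟩

lemma tendsto_muK : Tendsto muKP atTop (𝓝 gauP) := by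
  refine ProbabilityMeasure.tendsto_iff_tendsto_charFun.2 fun t ↦ ?_
  have hr : ∀ b, bet.real {b} = 2⁻¹ := fun b => by simp [Measure.real, bet_singleton]
  have := tendsto_charFun_inv_sqrt_mul_pow (P := bet) (X := rs) measurable_rs.aemeasurable
    (by rw [integral_fintype .of_finite]; simp [hr, rs])
    (by rw [integral_fintype .of_finite]; simp [hr, rs]) t
  simpa [muKP, gauP, charFun_muK, charFun_gaussianReal, neg_div] using this

def gam (ι : Type*) [Fintype ι] : Measure (ι → ℝ) := Measure.pi (fun _ : ι => gaussianReal 0 1)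

instance : IsProbabilityMeasure (gam ι) := by unfold gam; infer_instance

def q (y : ι → X) (v : ι → ℝ) : ℝ := ‖∑ j, (v j : ℂ) • y j‖ ^ 2

lemma q_cont (y : ι → X) : Continuous (q y) := by unfold q; fun_prop

lemma q_nonneg (y : ι → X) (v : ι → ℝ) : 0 ≤ q y v := by unfold q; positivity

def G (y : ι → X) : ENNReal := ∫⁻ v, ENNReal.ofReal (q y v) ∂(gam ι)

lemma lint_muK (K : ℕ) (y : ι → X) :
    ∫⁻ v, ENNReal.ofReal (q y v) ∂(Measure.pi (fun _ : ι => muK K))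
      = ENNReal.ofReal ((K : ℝ)⁻¹ * S1 (fun p : Fin K × ι => y p.2)) := by
  have hp : (Measure.pi (fun _ : ι => muK K)) =
      (Measure.pi (fun _ : ι => Measure.pi (fun _ : Fin K => bet))).map
        (fun ω i => (√K)⁻¹ * ∑ k, rs (ω i k)) := by
    unfold muK
    have : ∀ i : ι, SigmaFinite (Measure.map (fun ω : Fin K → Bool => (√K)⁻¹ * ∑ k, rs (ω k))
        (Measure.pi (fun _ : Fin K => bet))) := fun _ => by
      change SigmaFinite (muK K); infer_instance
    rw [← Measure.pi_map_pi (fun _ => (meas_aux K).aemeasurable)]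
  rw [hp, lintegral_map (by have := q_cont y; fun_prop) (measurable_of_countable _),
    lintegral_fintype]
  simp only [Measure.pi_singleton, bet_singleton]
  have e1 : ∀ ω : ι → Fin K → Bool, q y (fun i => (√K)⁻¹ * ∑ k, rs (ω i k))
      = (K : ℝ)⁻¹ * ‖∑ p : Fin K × ι, sgn (ω p.2 p.1) • y p.2‖ ^ 2 := by
    intro ω
    unfold q
    rw [Fintype.sum_prod_type_right]
    simp only [Complex.ofReal_mul, mul_smul, ← Finset.smul_sum, ← Finset.sum_smul,
      Complex.ofReal_sum, rs_coe]
    rw [norm_smul, mul_pow]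
    congr 1
    rw [Complex.norm_real, Real.norm_eq_abs, sq_abs, inv_pow, Real.sq_sqrt (by positivity)]
  simp only [e1]
  unfold S1
  simp only [Finset.prod_const, Finset.card_univ, Fintype.card_fin]
  have e2 : ((2⁻¹ : ENNReal) ^ K) ^ Fintype.card ι
      = ENNReal.ofReal ((2 ^ (Fintype.card (Fin K × ι)))⁻¹) := by
    rw [ENNReal.ofReal_inv_of_pos (by positivity), ENNReal.ofReal_pow (by norm_num), ← pow_mul]
    simp [ENNReal.inv_pow]
  rw [e2]
  simp only [← ENNReal.ofReal_mul' (inv_nonneg.2 (by positivity : (0:ℝ) ≤ 2 ^ (Fintype.card (Fin K × ι))))]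
  rw [← ENNReal.ofReal_sum_of_nonneg (fun _ _ => by positivity)]
  congr 1
  rw [← Finset.sum_mul, ← Finset.mul_sum, mul_assoc, div_eq_mul_inv]
  congr 2
  refine Fintype.sum_equiv
    (((Equiv.curry (Fin K) ι Bool).trans (Equiv.piComm (fun _ _ => Bool))).symm) _ _ fun ω => ?_
  rfl

lemma G_le {α : ℝ} (hα : 1 ≤ α) (h : PropAlphaWith X α) (y : ι → X) :
    G y ≤ ENNReal.ofReal (α ^ 2 * S1 y) := by
  have ht : Tendsto (fun K => ProbabilityMeasure.pi (fun _ : ι => muKP K)) atTop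
      (𝓝 (ProbabilityMeasure.pi (fun _ : ι => gauP))) :=
    (ProbabilityMeasure.continuous_pi.tendsto _).comp
      (tendsto_pi_nhds.2 fun _ => tendsto_muK)
  have h1 := lintegral_le_liminf_lintegral_of_forall_isOpen_measure_le_liminf_measure
    (q_cont y) (q_nonneg y)
    (fun O hO => ProbabilityMeasure.le_liminf_measure_open_of_tendsto ht hO)
  refine h1.trans ?_
  refine liminf_le_of_frequently_le' (Eventually.frequently ?_)
  filter_upwards [eventually_gt_atTop 0] with K hK
  change ∫⁻ v, ENNReal.ofReal (q y v) ∂(Measure.pi (fun _ : ι => muK K)) ≤ _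
  rw [lint_muK]
  apply ENNReal.ofReal_le_ofReal
  have h2 := S1_const_le hα h y (Fin K)
  have hK' : (0 : ℝ) < K := by exact_mod_cast hK
  rw [inv_mul_le_iff₀ hK']
  simp only [Fintype.card_fin] at h2
  linarith

lemma q_mid (y : ι → X) (u w : ι → ℝ) : q y u ≤ 2⁻¹ * (q y (u + w) + q y (u - w)) := by
  unfold q
  have h : ∑ j, ((u j : ℝ) : ℂ) • y j = (2⁻¹ : ℂ) • ((∑ j, (((u + w) j : ℝ) : ℂ) • y j)
      + ∑ j, (((u - w) j : ℝ) : ℂ) • y j) := by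
    rw [← Finset.sum_add_distrib, Finset.smul_sum]
    refine Finset.sum_congr rfl fun j _ => ?_
    rw [← add_smul, smul_smul]
    congr 1
    simp only [Pi.add_apply, Pi.sub_apply]
    push_cast; ring
  rw [h, norm_smul]
  have h2 := norm_add_le (∑ j, (((u + w) j : ℝ) : ℂ) • y j) (∑ j, (((u - w) j : ℝ) : ℂ) • y j)
  set a := ∑ j, (((u + w) j : ℝ) : ℂ) • y j
  set b := ∑ j, (((u - w) j : ℝ) : ℂ) • y j
  have h3 : ‖(2⁻¹ : ℂ)‖ = 2⁻¹ := by simp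
  rw [h3]
  nlinarith [sq_nonneg (‖a‖ - ‖b‖), norm_nonneg (a + b), norm_nonneg a, norm_nonneg b]

lemma G_std (y : ι → X) :
    G y = ∫⁻ v, ENNReal.ofReal (q y (WithLp.ofLp v)) ∂(stdGaussian (EuclideanSpace ℝ ι)) := by
  rw [← map_pi_eq_stdGaussian, lintegral_map]
  · rfl
  · have := q_cont y
    fun_prop
  · fun_prop

lemma charFun_map_adj {E : Type*} [NormedAddCommGroup E] [InnerProductSpace ℝ E]
    [FiniteDimensional ℝ E] [MeasurableSpace E] [BorelSpace E] (T : E →L[ℝ] E) (t : E) :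
    charFun ((stdGaussian E).map (ContinuousLinearMap.adjoint T)) t
      = charFun (stdGaussian E) (T t) := by
  rw [charFun_apply, charFun_apply, integral_map (by fun_prop) (by fun_prop)]
  simp only [ContinuousLinearMap.adjoint_inner_left]

lemma map_prod_std {E : Type*} [NormedAddCommGroup E] [InnerProductSpace ℝ E]
    [FiniteDimensional ℝ E] [MeasurableSpace E] [BorelSpace E] (T S : E →L[ℝ] E)
    (h : ∀ t, ‖T t‖ ^ 2 + ‖S t‖ ^ 2 = ‖t‖ ^ 2) :
    ((stdGaussian E).prod (stdGaussian E)).map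
      (fun p => ContinuousLinearMap.adjoint T p.1 + ContinuousLinearMap.adjoint S p.2)
      = stdGaussian E := by
  have i1 : IsProbabilityMeasure ((stdGaussian E).map (ContinuousLinearMap.adjoint T)) :=
    Measure.isProbabilityMeasure_map (by fun_prop)
  have i2 : IsProbabilityMeasure ((stdGaussian E).map (ContinuousLinearMap.adjoint S)) :=
    Measure.isProbabilityMeasure_map (by fun_prop)
  have h1 : ((stdGaussian E).prod (stdGaussian E)).map
      (fun p => ContinuousLinearMap.adjoint T p.1 + ContinuousLinearMap.adjoint S p.2)
      = (((stdGaussian E).map (ContinuousLinearMap.adjoint T)).prod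
        ((stdGaussian E).map (ContinuousLinearMap.adjoint S))).map (fun p => p.1 + p.2) := by
    rw [Measure.map_prod_map _ _ (by fun_prop) (by fun_prop),
      Measure.map_map (by fun_prop) (by fun_prop)]
    rfl
  rw [h1]
  apply Measure.ext_of_charFun
  ext t
  rw [charFun_map_add_prod_eq_mul, Pi.mul_apply, charFun_map_adj, charFun_map_adj]
  simp only [charFun_stdGaussian]
  rw [← Complex.exp_add]
  congr 1
  have ht : (‖T t‖ : ℂ) ^ 2 + (‖S t‖ : ℂ) ^ 2 = (‖t‖ : ℂ) ^ 2 := by exact_mod_cast h t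
  rw [← ht]
  ring

open scoped MatrixOrder Matrix.Norms.L2Operator in
lemma exists_compl (B : Matrix ι ι ℝ)
    (hB : ∀ v : ι → ℝ, ∑ i, (B.mulVec v i) ^ 2 ≤ ∑ i, v i ^ 2) :
    ∃ Q : Matrix ι ι ℝ, ∀ v : ι → ℝ,
      ∑ i, (B.mulVec v i) ^ 2 + ∑ i, (Q.mulVec v i) ^ 2 = ∑ i, v i ^ 2 := by
  have hd : ∀ v : ι → ℝ, ∑ i, v i ^ 2 = v ⬝ᵥ v := fun v => by
    simp [dotProduct, pow_two]
  have hM : ∀ (M : Matrix ι ι ℝ) (v : ι → ℝ), M.mulVec v ⬝ᵥ M.mulVec v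
      = v ⬝ᵥ (M.transpose * M).mulVec v := fun M v => by
    rw [← Matrix.mulVec_mulVec, Matrix.dotProduct_mulVec v, Matrix.vecMul_transpose]
  have hp : (1 - B.transpose * B).PosSemidef := by
    refine Matrix.PosSemidef.of_dotProduct_mulVec_nonneg ?_ ?_
    · simp [Matrix.IsHermitian]
    · intro v
      have := hB v
      rw [hd, hd, hM] at this
      simp only [star_trivial, Matrix.sub_mulVec, Matrix.one_mulVec, dotProduct_sub]
      linarith
  obtain ⟨Q, hQ⟩ := CStarAlgebra.nonneg_iff_eq_star_mul_self.1 (Matrix.nonneg_iff_posSemidef.2 hp)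
  rw [Matrix.star_eq_conjTranspose] at hQ
  refine ⟨Q, fun v => ?_⟩
  rw [hd, hd, hd, hM, hM]
  rw [Matrix.conjTranspose_eq_transpose_of_trivial] at hQ
  rw [← hQ, Matrix.sub_mulVec, dotProduct_sub, Matrix.one_mulVec]
  ring

lemma G_contr (B : Matrix ι ι ℝ)
    (hB : ∀ v : ι → ℝ, ∑ i, (B.mulVec v i) ^ 2 ≤ ∑ i, v i ^ 2) (y : ι → X) :
    G (fun i => ∑ j, (B i j : ℂ) • y j) ≤ G y := by
  obtain ⟨Q, hQ⟩ := exists_compl B hB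
  let T := Matrix.toEuclideanCLM (𝕜 := ℝ) B
  let S := Matrix.toEuclideanCLM (𝕜 := ℝ) Q
  have hTS : ∀ t, ‖T t‖ ^ 2 + ‖S t‖ ^ 2 = ‖t‖ ^ 2 := by
    intro t
    simp only [EuclideanSpace.real_norm_sq_eq]
    exact hQ (WithLp.ofLp t)
  have hTS' : ∀ t, ‖T t‖ ^ 2 + ‖(-S) t‖ ^ 2 = ‖t‖ ^ 2 := by
    intro t
    simpa using hTS t
  have hT : ∀ v, WithLp.ofLp (ContinuousLinearMap.adjoint T v) = B.transpose.mulVec (WithLp.ofLp v) := by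
    intro v
    have : ContinuousLinearMap.adjoint T = Matrix.toEuclideanCLM (𝕜 := ℝ) B.transpose := by
      rw [← ContinuousLinearMap.star_eq_adjoint, ← map_star, Matrix.star_eq_conjTranspose,
        Matrix.conjTranspose_eq_transpose_of_trivial]
    rw [this]
    rfl
  have hq : ∀ v : EuclideanSpace ℝ ι, q (fun i => ∑ j, (B i j : ℂ) • y j) (WithLp.ofLp v)
      = q y (WithLp.ofLp (ContinuousLinearMap.adjoint T v)) := by
    intro v
    rw [hT]
    unfold q
    congr 2
    simp only [Finset.smul_sum, smul_smul]
    rw [Finset.sum_comm]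
    refine Finset.sum_congr rfl fun j _ => ?_
    rw [← Finset.sum_smul]
    congr 1
    simp [Matrix.mulVec, dotProduct, mul_comm]
  have key : ∀ R : EuclideanSpace ℝ ι →L[ℝ] EuclideanSpace ℝ ι,
      (∀ t, ‖T t‖ ^ 2 + ‖R t‖ ^ 2 = ‖t‖ ^ 2) →
      ∫⁻ p, ENNReal.ofReal (q y (WithLp.ofLp (ContinuousLinearMap.adjoint T p.1
        + ContinuousLinearMap.adjoint R p.2)))
        ∂((stdGaussian (EuclideanSpace ℝ ι)).prod (stdGaussian (EuclideanSpace ℝ ι))) = G y := by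
    intro R hR
    have hqc := q_cont y
    rw [G_std, ← map_prod_std T R hR, lintegral_map (by fun_prop) (by fun_prop),
      map_prod_std T R hR]
  have k1 := key S hTS
  have k2 := key (-S) hTS'
  have hqc := q_cont y
  calc G (fun i => ∑ j, (B i j : ℂ) • y j)
      = ∫⁻ v, ENNReal.ofReal (q y (WithLp.ofLp (ContinuousLinearMap.adjoint T v)))
          ∂(stdGaussian (EuclideanSpace ℝ ι)) := by
        rw [G_std]; simp only [hq]
    _ = ∫⁻ p, ENNReal.ofReal (q y (WithLp.ofLp (ContinuousLinearMap.adjoint T p.1)))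
        ∂((stdGaussian (EuclideanSpace ℝ ι)).prod (stdGaussian (EuclideanSpace ℝ ι))) := by
        rw [lintegral_prod _ (by fun_prop)]
        simp
    _ ≤ ∫⁻ p, (2⁻¹ * (ENNReal.ofReal (q y (WithLp.ofLp (ContinuousLinearMap.adjoint T p.1
        + ContinuousLinearMap.adjoint S p.2))) + ENNReal.ofReal (q y (WithLp.ofLp
          (ContinuousLinearMap.adjoint T p.1 + ContinuousLinearMap.adjoint (-S) p.2)))))
        ∂((stdGaussian (EuclideanSpace ℝ ι)).prod (stdGaussian (EuclideanSpace ℝ ι))) := by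
        refine lintegral_mono fun p => ?_
        have h2 : (2⁻¹ : ENNReal) = ENNReal.ofReal 2⁻¹ := by
          rw [ENNReal.ofReal_inv_of_pos (by norm_num)]; simp
        rw [h2, ← ENNReal.ofReal_add (q_nonneg _ _) (q_nonneg _ _),
          ← ENNReal.ofReal_mul (by norm_num)]
        apply ENNReal.ofReal_le_ofReal
        have := q_mid y (WithLp.ofLp (ContinuousLinearMap.adjoint T p.1))
          (WithLp.ofLp (ContinuousLinearMap.adjoint S p.2))
        simpa [sub_eq_add_neg] using this
    _ = G y := by
        rw [lintegral_const_mul _ (by fun_prop), lintegral_add_left (by fun_prop), k1, k2,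
          ← two_mul, ← mul_assoc, ENNReal.inv_mul_cancel (by norm_num) (by norm_num), one_mul]

def cst : ℝ := ∫ x, |x| ∂(gaussianReal 0 1)

lemma cst_pos : 0 < cst := by
  have h0 : 0 ≤ cst := integral_nonneg fun x => abs_nonneg x
  rcases h0.lt_or_eq with h | h
  · exact h
  · exfalso
    have hi : Integrable (fun x : ℝ => |x|) (gaussianReal 0 1) :=
      (IsGaussian.integrable_id (μ := gaussianReal 0 1)).abs
    have h1 := (integral_eq_zero_iff_of_nonneg (fun x => abs_nonneg x) hi).1 h.symm
    have h2 : (id : ℝ → ℝ) =ᵐ[gaussianReal 0 1] 0 := by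
      filter_upwards [h1] with x hx
      simpa using hx
    have h3 := variance_congr h2
    rw [variance_id_gaussianReal] at h3
    simp at h3

lemma G_sgn (δ : ι → Bool) (y : ι → X) : G (fun j => sgn (δ j) • y j) = G y := by
  have hm : (gam ι).map (fun v j => rs (δ j) * v j) = gam ι := by
    unfold gam
    have hg : ∀ b : Bool, (gaussianReal 0 1).map (fun x => rs b * x) = gaussianReal 0 1 := by
      intro b
      rw [gaussianReal_map_const_mul]
      congr 1
      · simp
      · ext; cases b <;> simp [rs]
    have hsf : ∀ i : ι, SigmaFinite ((gaussianReal 0 1).map (fun x => rs (δ i) * x)) :=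
      fun i => by rw [hg]; infer_instance
    rw [Measure.pi_map_pi (f := fun i x => rs (δ i) * x) (fun _ => by fun_prop)]
    simp only [hg]
  have hqc := q_cont y
  unfold G
  conv_rhs => rw [← hm, lintegral_map (by fun_prop) (by fun_prop)]
  refine lintegral_congr fun v => ?_
  congr 1
  unfold q
  congr 2
  refine Finset.sum_congr rfl fun j _ => ?_
  rw [smul_smul, Complex.ofReal_mul, rs_coe, mul_comm]

def H (y : ι → X) (v : ι → ℝ) : ℝ := S1 (fun j => (v j : ℂ) • y j)

lemma H_eq (y : ι → X) (v : ι → ℝ) :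
    H y v = (∑ δ : ι → Bool, q (fun j => sgn (δ j) • y j) v) / 2 ^ (Fintype.card ι) := by
  unfold H S1 q
  simp only [smul_smul, mul_comm]

lemma H_cont (y : ι → X) : Continuous (H y) := by
  have : H y = fun v => (∑ δ : ι → Bool, q (fun j => sgn (δ j) • y j) v)
      / 2 ^ (Fintype.card ι) := funext (H_eq y)
  rw [this]
  have := fun δ : ι → Bool => q_cont (fun j => sgn (δ j) • y j)
  fun_prop

lemma H_abs (y : ι → X) (v : ι → ℝ) : H y (fun j => |v j|) = H y v := by
  unfold H
  rw [← S1_sgn (fun j => decide (0 ≤ v j)) (fun j => (v j : ℂ) • y j)]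
  congr 1
  funext j
  rw [smul_smul]
  congr 1
  by_cases h : 0 ≤ v j
  · simp [h, sgn, abs_of_nonneg h]
  · simp [h, sgn, abs_of_neg (not_le.1 h)]

lemma q_convex (y : ι → X) : ConvexOn ℝ Set.univ (q y) := by
  have hn : ConvexOn ℝ Set.univ (fun v : ι → ℝ => ‖∑ j, (v j : ℂ) • y j‖) := by
    refine ⟨convex_univ, fun u _ w _ a b ha hb _ => ?_⟩
    have : ∑ j, (((a • u + b • w) j : ℝ) : ℂ) • y j
        = (a : ℂ) • ∑ j, (u j : ℂ) • y j + (b : ℂ) • ∑ j, (w j : ℂ) • y j := by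
      rw [Finset.smul_sum, Finset.smul_sum, ← Finset.sum_add_distrib]
      refine Finset.sum_congr rfl fun j _ => ?_
      rw [smul_smul, smul_smul, ← add_smul]
      simp
    beta_reduce
    rw [this]
    refine (norm_add_le _ _).trans ?_
    rw [norm_smul, norm_smul]
    simp [abs_of_nonneg ha, abs_of_nonneg hb]
  exact hn.pow (fun _ _ => norm_nonneg _) 2

lemma H_convex (y : ι → X) : ConvexOn ℝ Set.univ (H y) := by
  refine ⟨convex_univ, fun u _ w _ a b ha hb hab => ?_⟩
  simp only [H_eq, smul_eq_mul]
  rw [← mul_div_assoc, ← mul_div_assoc, ← add_div, Finset.mul_sum, Finset.mul_sum,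
    ← Finset.sum_add_distrib]
  gcongr with δ
  simpa using (q_convex (fun j => sgn (δ j) • y j)).2 (Set.mem_univ u) (Set.mem_univ w) ha hb hab

lemma H_nonneg (y : ι → X) (v : ι → ℝ) : 0 ≤ H y v := S1_nonneg _

lemma G_eq_H (y : ι → X) : G y = ∫⁻ v, ENNReal.ofReal (H y (fun j => |v j|)) ∂(gam ι) := by
  simp only [H_abs]
  have h1 : ∀ v, ENNReal.ofReal (H y v) = (∑ δ : ι → Bool, ENNReal.ofReal
      (q (fun j => sgn (δ j) • y j) v)) * ENNReal.ofReal ((2 ^ (Fintype.card ι))⁻¹) := by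
    intro v
    rw [H_eq, div_eq_mul_inv, ENNReal.ofReal_mul (Finset.sum_nonneg fun _ _ => q_nonneg _ _),
      ENNReal.ofReal_sum_of_nonneg (fun _ _ => q_nonneg _ _)]
  simp only [h1]
  have hqc := fun δ : ι → Bool => q_cont (fun j => sgn (δ j) • y j)
  rw [lintegral_mul_const _ (by fun_prop), lintegral_finsetSum _ (fun δ _ => by fun_prop)]
  have : ∀ δ : ι → Bool, ∫⁻ v, ENNReal.ofReal (q (fun j => sgn (δ j) • y j) v) ∂(gam ι) = G y :=
    fun δ => G_sgn δ y
  simp only [this]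
  rw [Finset.sum_const, nsmul_eq_mul, mul_comm, ← mul_assoc]
  have h2 : ENNReal.ofReal ((2 ^ (Fintype.card ι))⁻¹) * (((Finset.univ : Finset (ι → Bool)).card : ℕ) : ENNReal) = 1 := by
    rw [← ENNReal.ofReal_natCast, ← ENNReal.ofReal_mul (by positivity)]
    simp
  rw [h2, one_mul]

lemma le_G (y : ι → X) : ENNReal.ofReal (cst ^ 2 * S1 y) ≤ G y := by
  by_cases hG : G y = ⊤
  · rw [hG]; exact le_top
  have hHc := H_cont y
  have hint : Integrable (fun v : ι → ℝ => H y (fun j => |v j|)) (gam ι) := by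
    refine ⟨(hHc.comp (by fun_prop)).aestronglyMeasurable, ?_⟩
    rw [hasFiniteIntegral_iff_ofReal (ae_of_all _ fun v => H_nonneg _ _), ← G_eq_H]
    exact lt_top_iff_ne_top.2 hG
  have hab : ∀ j : ι, Integrable (fun v : ι → ℝ => |v j|) (gam ι) := fun j =>
    (integrable_eval (μ := fun _ : ι => gaussianReal 0 1) (i := j)
      IsGaussian.integrable_id).abs
  have hvi : Integrable (fun v : ι → ℝ => (fun j => |v j|)) (gam ι) :=
    Integrable.of_eval hab
  have hJ := (H_convex y).map_integral_le (μ := gam ι) (f := fun v : ι → ℝ => (fun j => |v j|))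
    hHc.continuousOn isClosed_univ (ae_of_all _ fun _ => Set.mem_univ _) hvi hint
  have hval : (∫ v, (fun j => |v j|) ∂(gam ι)) = fun _ : ι => cst := by
    funext j
    rw [eval_integral hab]
    exact integral_comp_eval (μ := fun _ : ι => gaussianReal 0 1) (i := j) (f := fun x => |x|)
      (by fun_prop)
  have hH : H y (fun _ => cst) = cst ^ 2 * S1 y := by
    unfold H S1
    rw [← mul_div_assoc, Finset.mul_sum]
    congr 1
    refine Finset.sum_congr rfl fun ε _ => ?_
    simp only [smul_comm (sgn _) (cst : ℂ), ← Finset.smul_sum]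
    rw [norm_smul, mul_pow, Complex.norm_real, Real.norm_eq_abs, sq_abs]
  rw [hval, hH] at hJ
  rw [G_eq_H, ← ofReal_integral_eq_lintegral_ofReal hint (ae_of_all _ fun v => H_nonneg _ _)]
  exact ENNReal.ofReal_le_ofReal hJ

lemma S1_contr {α : ℝ} (hα : 1 ≤ α) (h : PropAlphaWith X α) (B : Matrix ι ι ℝ)
    (hB : ∀ v : ι → ℝ, ∑ i, (B.mulVec v i) ^ 2 ≤ ∑ i, v i ^ 2) (y : ι → X) :
    cst ^ 2 * S1 (fun i => ∑ j, (B i j : ℂ) • y j) ≤ α ^ 2 * S1 y :=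
  (ENNReal.ofReal_le_ofReal_iff (mul_nonneg (sq_nonneg _) (S1_nonneg _))).1
    ((le_G _).trans ((G_contr B hB y).trans (G_le hα h y)))

lemma S1_add (y z : ι → X) : S1 (fun j => y j + Complex.I • z j) ≤ 2 * S1 y + 2 * S1 z := by
  unfold S1
  rw [← mul_div_assoc, ← mul_div_assoc, ← add_div, Finset.mul_sum, Finset.mul_sum,
    ← Finset.sum_add_distrib]
  gcongr with ε
  have : ∑ j, sgn (ε j) • (y j + Complex.I • z j)
      = ∑ j, sgn (ε j) • y j + Complex.I • ∑ j, sgn (ε j) • z j := by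
    simp only [smul_add, Finset.sum_add_distrib, Finset.smul_sum, smul_comm Complex.I]
  rw [this]
  have h := norm_add_le (∑ j, sgn (ε j) • y j) (Complex.I • ∑ j, sgn (ε j) • z j)
  rw [norm_smul, Complex.norm_I, one_mul] at h
  nlinarith [sq_nonneg (‖∑ j, sgn (ε j) • y j‖ - ‖∑ j, sgn (ε j) • z j‖), norm_nonneg
    (∑ j, sgn (ε j) • y j + Complex.I • ∑ j, sgn (ε j) • z j)]

lemma mat_bd (A : Matrix ι ι ℂ) (hA : matOpNorm A ≤ 1) (v : ι → ℝ) :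
    ∑ i, ‖∑ j, A i j * (v j : ℂ)‖ ^ 2 ≤ ∑ i, v i ^ 2 := by
  let w : EuclideanSpace ℂ ι := WithLp.toLp 2 (fun j => (v j : ℂ))
  have h1 : ‖Matrix.toEuclideanCLM (𝕜 := ℂ) A w‖ ≤ ‖w‖ := by
    refine (ContinuousLinearMap.le_opNorm _ _).trans ?_
    exact mul_le_of_le_one_left (norm_nonneg _) hA
  have h2 := pow_le_pow_left₀ (norm_nonneg _) h1 2
  rw [EuclideanSpace.norm_sq_eq, EuclideanSpace.norm_sq_eq] at h2
  have e : ∑ i, ‖w i‖ ^ 2 = ∑ i, v i ^ 2 := by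
    simp [w]
  rw [e] at h2
  exact h2

lemma S1_mat {α : ℝ} (hα : 1 ≤ α) (h : PropAlphaWith X α) (A : Matrix ι ι ℂ)
    (hA : matOpNorm A ≤ 1) (y : ι → X) :
    cst ^ 2 * S1 (fun i => ∑ j, A i j • y j) ≤ 4 * α ^ 2 * S1 y := by
  have h1 := S1_contr hα h (A.map Complex.re) (fun v => by
    refine le_trans (Finset.sum_le_sum fun i _ => ?_) (mat_bd A hA v)
    rw [← sq_abs]
    gcongr
    refine le_trans (le_of_eq ?_) (Complex.abs_re_le_norm _)
    simp [Matrix.mulVec, dotProduct]) y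
  have h2 := S1_contr hα h (A.map Complex.im) (fun v => by
    refine le_trans (Finset.sum_le_sum fun i _ => ?_) (mat_bd A hA v)
    rw [← sq_abs]
    gcongr
    refine le_trans (le_of_eq ?_) (Complex.abs_im_le_norm _)
    simp [Matrix.mulVec, dotProduct]) y
  have e : (fun i => ∑ j, A i j • y j) = fun i =>
      (∑ j, (((A.map Complex.re) i j : ℝ) : ℂ) • y j)
        + Complex.I • ∑ j, (((A.map Complex.im) i j : ℝ) : ℂ) • y j := by
    funext i
    rw [Finset.smul_sum, ← Finset.sum_add_distrib]
    refine Finset.sum_congr rfl fun j _ => ?_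
    rw [smul_smul, ← add_smul]
    congr 1
    rw [mul_comm]
    simp
  rw [e]
  have h3 := S1_add (fun i => ∑ j, (((A.map Complex.re) i j : ℝ) : ℂ) • y j)
    (fun i => ∑ j, (((A.map Complex.im) i j : ℝ) : ℂ) • y j)
  have h4 := mul_le_mul_of_nonneg_left h3 (sq_nonneg cst)
  linarith

end SigmaAlpha

universe u

/-- Lemma 5.3: on a Banach space with property (α), the canonical homomorphisms
`σ_{m,X} : M_m(ℂ) → B(Rad_m(X))` are matricially R-bounded, uniformly in `m`. -/
theorem sigma_mX_uniformly_matricially_R_bounded (α : ℝ) (hα : 1 ≤ α) :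
    ∃ D : ℝ, 1 ≤ D ∧
      ∀ (X : Type u) (_ : NormedAddCommGroup X) (_ : NormedSpace ℂ X),
      PropAlphaWith X α →
      ∀ (n m : ℕ) (a : Fin n → Fin n → Matrix (Fin m) (Fin m) ℂ),
        matOpNorm (Matrix.of fun (p q : Fin n × Fin m) =>
          a p.1 q.1 p.2 q.2) ≤ 1 →
      ∀ x : Fin n → Fin m → X,
        radNorm2 (fun i k => ∑ j, ∑ l, a i j k l • x j l) ≤ D * radNorm2 x := by
  have hc := SigmaAlpha.cst_pos
  refine ⟨max 1 (2 * α ^ 3 / SigmaAlpha.cst), le_max_left _ _, ?_⟩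
  intro X _ _ hX n m a ha x
  rw [SigmaAlpha.radNorm2_eq, SigmaAlpha.radNorm2_eq]
  have hD : 0 ≤ 2 * α ^ 3 / SigmaAlpha.cst := by positivity
  have h1 := SigmaAlpha.S2_le_S1 hα hX (fun i k => ∑ j, ∑ l, a i j k l • x j l)
  have h2 := SigmaAlpha.S1_mat hα hX _ ha (fun p : Fin n × Fin m => x p.1 p.2)
  have h3 := SigmaAlpha.S1_le_S2 hα hX x
  simp only [Fintype.sum_prod_type, Matrix.of_apply] at h2
  have key : SigmaAlpha.S2 (fun i k => ∑ j, ∑ l, a i j k l • x j l)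
      ≤ (2 * α ^ 3 / SigmaAlpha.cst) ^ 2 * SigmaAlpha.S2 x := by
    rw [div_pow, div_mul_eq_mul_div, le_div_iff₀ (by positivity)]
    set s := SigmaAlpha.S2 (fun i k => ∑ j, ∑ l, a i j k l • x j l)
    set r := SigmaAlpha.S1 (fun p : Fin n × Fin m => x p.1 p.2)
    set c := SigmaAlpha.cst
    calc s * c ^ 2 ≤ (α ^ 2 * _) * c ^ 2 := mul_le_mul_of_nonneg_right h1 (sq_nonneg c)
      _ = α ^ 2 * (c ^ 2 * _) := by ring
      _ ≤ α ^ 2 * (4 * α ^ 2 * r) := mul_le_mul_of_nonneg_left h2 (sq_nonneg α)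
      _ ≤ α ^ 2 * (4 * α ^ 2 * (α ^ 2 * SigmaAlpha.S2 x)) := by gcongr
      _ = _ := by ring
  calc √(SigmaAlpha.S2 (fun i k => ∑ j, ∑ l, a i j k l • x j l))
      ≤ √((2 * α ^ 3 / SigmaAlpha.cst) ^ 2 * SigmaAlpha.S2 x) := Real.sqrt_le_sqrt key
    _ = 2 * α ^ 3 / SigmaAlpha.cst * √(SigmaAlpha.S2 x) := by
        rw [Real.sqrt_mul (sq_nonneg _), Real.sqrt_sq hD]
    _ ≤ _ := mul_le_mul_of_nonneg_right (le_max_right _ _) (Real.sqrt_nonneg _)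

end
end

section
/- For every α≥1 there exists a constant K≥1 with the following property. Let X be a complex Banach space having property (α) with constant at most α, let A = ⊕_{k=1}^N M_{n_k}(ℂ) be a finite dimensional C*-algebra (norm = maximum of the block operator norms), and let w: A→B(X) be a bounded unital algebra homomorphism. Then w is matricially R-bounded with ‖w‖_{mat,R} ≤ K‖w‖²; that is, for every n, every matrix [a_{ij}]∈M_n(A) and all x_1,…,x_n∈X: (2^{-n}Σ_{ε∈{±1}^n}‖Σ_{i,j=1}^n ε_i w(a_{ij})x_j‖²)^{1/2} ≤ K‖w‖²·‖[a_{ij}]‖_{M_n(A)}·(2^{-n}Σ_{ε∈{±1}^n}‖Σ_{j=1}^n ε_j x_j‖²)^{1/2}, where ‖[a_{ij}]‖_{M_n(A)} is the C*-norm of M_n(A) ≅ ⊕_{k=1}^N M_{n·n_k}(ℂ), i.e. the maximum over k of the operator norms of the n·n_k × n·n_k block matrices. -/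
noncomputable section

universe u

open BigOperators

lemma norm_sgn (b : Bool) : ‖sgn b‖ = 1 := by cases b <;> simp [sgn]

lemma sgn_mul_self (b : Bool) : sgn b * sgn b = 1 := by cases b <;> simp [sgn]

lemma sgn_beq (a b : Bool) : sgn (a == b) = sgn a * sgn b := by
  cases a <;> cases b <;> simp [sgn]

/-- Flip signs. -/
def flipE {ι : Type*} (σ : ι → Bool) : Equiv.Perm (ι → Bool) :=
  Function.Involutive.toPerm (fun ε i => ε i == σ i) (by
    intro ε; funext i; show ((ε i == σ i) == σ i) = ε i
    cases ε i <;> cases σ i <;> rfl)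

lemma sgn_flipE {ι : Type*} (σ ε : ι → Bool) (i : ι) :
    sgn (flipE σ ε i) = sgn (ε i) * sgn (σ i) := sgn_beq _ _

/-- Squared Rademacher average. -/
def Rd {X : Type*} [NormedAddCommGroup X] [NormedSpace ℂ X] {ι : Type*} [Fintype ι]
    [DecidableEq ι] (x : ι → X) : ℝ :=
  𝔼 ε : ι → Bool, ‖∑ i, sgn (ε i) • x i‖ ^ 2

/-- Squared double Rademacher average. -/
def Rd2 {X : Type*} [NormedAddCommGroup X] [NormedSpace ℂ X] {ι κ : Type*} [Fintype ι]
    [DecidableEq ι] [Fintype κ] [DecidableEq κ] (x : ι → κ → X) : ℝ :=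
  𝔼 ε : ι → Bool, 𝔼 η : κ → Bool, ‖∑ i, ∑ j, (sgn (ε i) * sgn (η j)) • x i j‖ ^ 2

section P1
variable {X : Type*} [NormedAddCommGroup X] [NormedSpace ℂ X]
variable {ι κ : Type*} [Fintype ι] [DecidableEq ι] [Fintype κ] [DecidableEq κ]

lemma Rd_nonneg (x : ι → X) : 0 ≤ Rd x :=
  Finset.expect_nonneg fun _ _ => by positivity

lemma Rd2_nonneg (x : ι → κ → X) : 0 ≤ Rd2 x :=
  Finset.expect_nonneg fun _ _ => Finset.expect_nonneg fun _ _ => by positivity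

lemma expect_flip (σ : ι → Bool) (f : (ι → Bool) → ℝ) :
    𝔼 ε : ι → Bool, f (flipE σ ε) = 𝔼 ε : ι → Bool, f ε :=
  Fintype.expect_equiv (flipE σ) _ _ (fun _ => rfl)

lemma radNorm_eq {n : ℕ} (x : Fin n → X) : radNorm x = Real.sqrt (Rd x) := by
  simp [radNorm, Rd, Fintype.expect_eq_sum_div_card]

lemma radNorm2_eq {n m : ℕ} (x : Fin n → Fin m → X) : radNorm2 x = Real.sqrt (Rd2 x) := by
  simp only [radNorm2, Rd2, Fintype.expect_eq_sum_div_card, ← Finset.sum_div, div_div]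
  simp [pow_add, mul_comm]

lemma Rd_equiv {ι' : Type*} [Fintype ι'] [DecidableEq ι'] (e : ι' ≃ ι) (x : ι → X) :
    Rd (fun i => x (e i)) = Rd x := by
  unfold Rd
  refine Fintype.expect_equiv (e.arrowCongr (Equiv.refl Bool)) _ _ (fun ε => ?_)
  congr 2
  exact Fintype.sum_equiv e _ _ (fun i => by simp)

lemma Rd2_equiv {ι' κ' : Type*} [Fintype ι'] [DecidableEq ι'] [Fintype κ'] [DecidableEq κ']
    (e : ι' ≃ ι) (e' : κ' ≃ κ) (x : ι → κ → X) :
    Rd2 (fun i j => x (e i) (e' j)) = Rd2 x := by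
  unfold Rd2
  refine Fintype.expect_equiv (e.arrowCongr (Equiv.refl Bool)) _ _ (fun ε => ?_)
  refine Fintype.expect_equiv (e'.arrowCongr (Equiv.refl Bool)) _ _ (fun η => ?_)
  congr 2
  refine Fintype.sum_equiv e _ _ (fun i => ?_)
  exact Fintype.sum_equiv e' _ _ (fun i => by simp)

lemma alpha_gen {α : ℝ} (hα : 1 ≤ α) (h : PropAlphaWith X α) (x : ι → κ → X) (t : ι → κ → ℂ)
    (ht : ∀ i j, ‖t i j‖ ≤ 1) : Rd2 (fun i j => t i j • x i j) ≤ α ^ 2 * Rd2 x := by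
  have e := (Fintype.equivFin ι).symm
  have e' := (Fintype.equivFin κ).symm
  have := h _ _ (fun i j => x (e i) (e' j)) (fun i j => t (e i) (e' j)) (fun i j => ht _ _)
  rw [radNorm2_eq, radNorm2_eq, Rd2_equiv e e' x,
    Rd2_equiv e e' (fun i j => t i j • x i j)] at this
  have h2 := pow_le_pow_left₀ (Real.sqrt_nonneg _) this 2
  rwa [Real.sq_sqrt (Rd2_nonneg _), mul_pow, Real.sq_sqrt (Rd2_nonneg _)] at h2

lemma Rd2_unit (x : ι → X) : Rd2 (fun (_ : Unit) j => x j) = Rd x := by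
  unfold Rd2 Rd
  have : ∀ ε : Unit → Bool, (𝔼 η : ι → Bool, ‖∑ i : Unit, ∑ j, (sgn (ε i) * sgn (η j)) • x j‖ ^ 2)
      = 𝔼 η : ι → Bool, ‖∑ j, sgn (η j) • x j‖ ^ 2 := by
    intro ε
    refine Finset.expect_congr rfl fun η _ => ?_
    simp only [mul_smul, Finset.univ_unique, Finset.sum_singleton, ← Finset.smul_sum, norm_smul,
      norm_sgn, one_mul]
  simp only [this, Fintype.expect_const]

lemma Rd_contract {α : ℝ} (hα : 1 ≤ α) (h : PropAlphaWith X α) (x : ι → X) (t : ι → ℂ)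
    (ht : ∀ i, ‖t i‖ ≤ 1) : Rd (fun i => t i • x i) ≤ α ^ 2 * Rd x := by
  rw [← Rd2_unit, ← Rd2_unit]
  exact alpha_gen hα h (fun (_ : Unit) j => x j) (fun _ j => t j) (fun _ j => ht j)

lemma expect_Rd2 (x : ι → κ → X) :
    𝔼 ρ : ι × κ → Bool, Rd2 (fun i j => sgn (ρ (i, j)) • x i j) =
      Rd (fun p : ι × κ => x p.1 p.2) := by
  unfold Rd2
  rw [Finset.expect_comm]
  have : ∀ ε : ι → Bool, 𝔼 ρ : ι × κ → Bool, 𝔼 η : κ → Bool,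
      ‖∑ i, ∑ j, (sgn (ε i) * sgn (η j)) • sgn (ρ (i, j)) • x i j‖ ^ 2 =
      Rd (fun p : ι × κ => x p.1 p.2) := by
    intro ε
    rw [Finset.expect_comm]
    have : ∀ η : κ → Bool, 𝔼 ρ : ι × κ → Bool,
      ‖∑ i, ∑ j, (sgn (ε i) * sgn (η j)) • sgn (ρ (i, j)) • x i j‖ ^ 2 =
      Rd (fun p : ι × κ => x p.1 p.2) := by
      intro η
      unfold Rd
      rw [← expect_flip (fun p : ι × κ => ε p.1 == η p.2)
        (fun ρ => ‖∑ p, sgn (ρ p) • x p.1 p.2‖ ^ 2)]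
      refine Finset.expect_congr rfl fun ρ _ => ?_
      congr 2
      rw [Fintype.sum_prod_type]
      refine Finset.sum_congr rfl fun i _ => Finset.sum_congr rfl fun j _ => ?_
      rw [sgn_flipE, sgn_beq, smul_smul]
      show _ = (sgn (ρ (i, j)) * (sgn (ε i) * sgn (η j))) • x i j
      rw [mul_comm]
    simp only [this, Fintype.expect_const]
  simp only [this, Fintype.expect_const]

lemma Rd_le_Rd2 {α : ℝ} (hα : 1 ≤ α) (h : PropAlphaWith X α) (x : ι → κ → X) :
    Rd (fun p : ι × κ => x p.1 p.2) ≤ α ^ 2 * Rd2 x := by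
  rw [← expect_Rd2]
  refine (Finset.expect_le_expect (g := fun _ => α ^ 2 * Rd2 x) fun ρ _ => ?_).trans ?_
  · exact alpha_gen hα h x _ (fun i j => (norm_sgn _).le)
  · rw [Fintype.expect_const]

lemma Rd2_le_Rd {α : ℝ} (hα : 1 ≤ α) (h : PropAlphaWith X α) (x : ι → κ → X) :
    Rd2 x ≤ α ^ 2 * Rd (fun p : ι × κ => x p.1 p.2) := by
  rw [← expect_Rd2, Finset.mul_expect]
  refine le_trans ?_ (Finset.expect_le_expect (f := fun _ => Rd2 x) fun ρ _ => ?_)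
  · rw [Fintype.expect_const]
  · have := alpha_gen hα h (fun i j => sgn (ρ (i, j)) • x i j) (fun i j => sgn (ρ (i, j)))
      (fun i j => (norm_sgn _).le)
    simpa only [smul_smul, sgn_mul_self, one_smul] using this

lemma norm_sq_sum_sgn (ε : ι → Bool) :
    ‖∑ i, sgn (ε i)‖ ^ 2 = ∑ i, ∑ j, (sgn (ε i) * sgn (ε j)).re := by
  have hr : ∀ b, sgn b = (((sgn b).re : ℝ) : ℂ) := by intro b; cases b <;> simp [sgn]
  have : (∑ i, sgn (ε i)) = ((∑ i, (sgn (ε i)).re : ℝ) : ℂ) := by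
    push_cast
    exact Finset.sum_congr rfl fun i _ => hr _
  rw [this, Complex.norm_real, Real.norm_eq_abs, sq_abs, sq, Finset.sum_mul_sum]
  refine Finset.sum_congr rfl fun i _ => Finset.sum_congr rfl fun j _ => ?_
  have : (sgn (ε j)).im = 0 := by rw [hr]; simp
  simp [Complex.mul_re, this]

lemma expect_norm_sq_sum_sgn :
    𝔼 ε : ι → Bool, ‖∑ i, sgn (ε i)‖ ^ 2 = Fintype.card ι := by
  simp only [norm_sq_sum_sgn]
  rw [Finset.expect_sum_comm]
  have : ∀ i : ι, 𝔼 ε : ι → Bool, ∑ j, (sgn (ε i) * sgn (ε j)).re = 1 := by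
    intro i
    rw [Finset.expect_sum_comm, Finset.sum_eq_single i]
    · simp [sgn_mul_self]
    · intro j _ hj
      have h1 := expect_flip (fun k => decide (k ≠ j)) (fun ε => (sgn (ε i) * sgn (ε j)).re)
      simp only [sgn_flipE] at h1
      have h2 : sgn (decide (i ≠ j)) = 1 := by simp [sgn, hj.symm]
      have h3 : sgn (decide (j ≠ j)) = -1 := by simp [sgn]
      simp only [h2, h3, mul_one, mul_neg, Complex.neg_re, Finset.expect_neg_distrib] at h1
      linarith
    · simp
  rw [Finset.sum_congr rfl fun i _ => this i]
  simp

lemma Rd2_const (z : κ → X) :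
    Rd2 (fun (_ : ι) l => z l) = Fintype.card ι * Rd z := by
  unfold Rd2
  rw [← expect_norm_sq_sum_sgn, Finset.expect_mul]
  refine Finset.expect_congr rfl fun ε _ => ?_
  rw [Rd, Finset.mul_expect]
  refine Finset.expect_congr rfl fun η _ => ?_
  simp only [mul_smul, ← Finset.smul_sum]
  rw [← Finset.sum_smul, norm_smul, mul_pow]

end P1

open MeasureTheory ProbabilityTheory Filter

/-- Uniform measure on a finite type. -/
def uni (Ω : Type*) [Fintype Ω] [Nonempty Ω] [MeasurableSpace Ω] : Measure Ω :=
  (PMF.uniformOfFintype Ω).toMeasure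

instance (Ω : Type*) [Fintype Ω] [Nonempty Ω] [MeasurableSpace Ω] :
    IsProbabilityMeasure (uni Ω) := by unfold uni; infer_instance

lemma integral_uni {Ω : Type*} [Fintype Ω] [Nonempty Ω] [MeasurableSpace Ω]
    [MeasurableSingletonClass Ω] (f : Ω → ℝ) : ∫ a, f a ∂(uni Ω) = 𝔼 a, f a := by
  rw [uni, PMF.integral_eq_sum, Fintype.expect_eq_sum_div_card, Finset.sum_div]
  simp [div_eq_inv_mul]

lemma integral_uniC {Ω : Type*} [Fintype Ω] [Nonempty Ω] [MeasurableSpace Ω]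
    [MeasurableSingletonClass Ω] (f : Ω → ℂ) : ∫ a, f a ∂(uni Ω) = 𝔼 a, f a := by
  rw [uni, PMF.integral_eq_sum, Fintype.expect_eq_sum_div_card, Finset.sum_div]
  simp [div_eq_inv_mul]

/-- real sign -/
def sr (b : Bool) : ℝ := if b then 1 else -1

lemma sgn_eq_sr (b : Bool) : sgn b = (sr b : ℂ) := by cases b <;> simp [sgn, sr]

lemma expect_exp {J : Type*} [Fintype J] [DecidableEq J] (c : J → ℝ) :
    𝔼 ε : J → Bool, Complex.exp (((∑ j, sr (ε j) * c j : ℝ) : ℂ) * Complex.I) =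
      ∏ j, Complex.cos (c j) := by
  have h1 : ∀ ε : J → Bool, Complex.exp (((∑ j, sr (ε j) * c j : ℝ) : ℂ) * Complex.I) =
      ∏ j, Complex.exp ((sr (ε j) * c j : ℝ) * Complex.I) := by
    intro ε
    rw [← Complex.exp_sum, ← Finset.sum_mul]
    push_cast
    rfl
  have h2 : ∀ j, Complex.cos (c j) =
      ∑ b : Bool, (Complex.exp ((sr b * c j : ℝ) * Complex.I)) / 2 := by
    intro j
    simp [sr, Complex.cos]
    ring
  simp only [h1, h2]
  rw [Finset.prod_univ_sum, Fintype.piFinset_univ, Fintype.expect_eq_sum_div_card, Finset.sum_div]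
  refine Finset.sum_congr rfl fun ε _ => ?_
  rw [Finset.prod_div_distrib]
  simp

lemma tendsto_cos_pow (c : ℝ) : Tendsto (fun n : ℕ => Complex.cos (((√(n : ℝ))⁻¹ * c : ℝ)) ^ n)
    atTop (nhds (Complex.exp (-(c : ℂ) ^ 2 / 2))) := by
  have hm : Measurable sr := measurable_of_finite _
  have := tendsto_charFun_inv_sqrt_mul_pow (P := uni Bool) (X := sr) hm.aemeasurable
    (by rw [integral_uni, Fintype.expect_eq_sum_div_card]; simp [sr])
    (by rw [integral_uni]; simp [Fintype.expect_eq_sum_div_card, sr]) c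
  refine this.congr fun n => ?_
  congr 1
  rw [charFun_apply, integral_map hm.aemeasurable (by fun_prop), integral_uniC,
    Fintype.expect_eq_sum_div_card]
  simp [sr, Complex.cos]

section P2
variable {ι : Type*} [Fintype ι] [DecidableEq ι]

/-- sample space -/
abbrev Om (N : ℕ) (ι : Type*) : Type _ := (Fin N × ι → Bool) × (Fin N × ι → Bool)

/-- normalised sum -/
def SN (N : ℕ) (ω : Om N ι) : EuclideanSpace ℂ ι :=
  WithLp.toLp 2 fun l => (((√(N : ℝ))⁻¹ : ℝ) : ℂ) *
    ∑ k, (sgn (ω.1 (k, l)) + Complex.I * sgn (ω.2 (k, l)))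

lemma inner_SN (N : ℕ) (ω : Om N ι) (t : EuclideanSpace ℂ ι) :
    inner ℝ (SN N ω) t = (∑ p, sr (ω.1 p) * ((√(N : ℝ))⁻¹ * (t p.2).re)) +
      ∑ p, sr (ω.2 p) * ((√(N : ℝ))⁻¹ * (t p.2).im) := by
  rw [PiLp.inner_apply, Fintype.sum_prod_type_right, Fintype.sum_prod_type_right,
    ← Finset.sum_add_distrib]
  refine Finset.sum_congr rfl fun l _ => ?_
  simp only [SN, Complex.inner, sgn_eq_sr]
  rw [← Finset.sum_mul, ← Finset.sum_mul, Finset.sum_add_distrib, ← Finset.mul_sum]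
  have e1 : (∑ k, (sr (ω.1 (k, l)) : ℂ)) = ((∑ k, sr (ω.1 (k, l)) : ℝ) : ℂ) := by push_cast; rfl
  have e2 : (∑ k, (sr (ω.2 (k, l)) : ℂ)) = ((∑ k, sr (ω.2 (k, l)) : ℝ) : ℂ) := by push_cast; rfl
  rw [e1, e2]
  generalize (√(N : ℝ))⁻¹ = r
  simp [Complex.mul_re, Complex.mul_im]
  ring

lemma measurable_SN (N : ℕ) : Measurable (SN N : Om N ι → _) := measurable_of_finite _

lemma charFun_SN (N : ℕ) (t : EuclideanSpace ℂ ι) :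
    charFun ((uni (Om N ι)).map (SN N)) t =
      (∏ l, Complex.cos (((√(N : ℝ))⁻¹ * (t l).re : ℝ)) ^ N) *
      ∏ l, Complex.cos (((√(N : ℝ))⁻¹ * (t l).im : ℝ)) ^ N := by
  rw [charFun_apply, integral_map (measurable_SN N).aemeasurable (by fun_prop), integral_uniC]
  simp only [inner_SN]
  have := expect_exp (J := Fin N × ι) (fun p => (√(N : ℝ))⁻¹ * (t p.2).re)
  have h' := expect_exp (J := Fin N × ι) (fun p => (√(N : ℝ))⁻¹ * (t p.2).im)
  rw [Fintype.prod_prod_type_right] at this h'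
  simp only [Finset.prod_const, Finset.card_univ, Fintype.card_fin] at this h'
  rw [← this, ← h', Finset.expect_mul_expect, ← Finset.univ_product_univ, Finset.expect_product]
  refine Finset.expect_congr rfl fun ε _ => Finset.expect_congr rfl fun η _ => ?_
  rw [← Complex.exp_add]
  push_cast
  rw [add_mul]

lemma tendsto_charFun_SN (t : EuclideanSpace ℂ ι) :
    Tendsto (fun N : ℕ => charFun ((uni (Om N ι)).map (SN N)) t) atTop
      (nhds (charFun (stdGaussian (EuclideanSpace ℂ ι)) t)) := by
  simp only [charFun_SN, charFun_stdGaussian]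
  have e : Complex.exp (-(‖t‖ : ℂ) ^ 2 / 2) =
      (∏ l, Complex.exp (-(((t l).re : ℝ) : ℂ) ^ 2 / 2)) *
        ∏ l, Complex.exp (-(((t l).im : ℝ) : ℂ) ^ 2 / 2) := by
    rw [← Complex.exp_sum, ← Complex.exp_sum, ← Complex.exp_add, ← Finset.sum_add_distrib]
    congr 1
    have := EuclideanSpace.norm_sq_eq t
    have h2 : ((‖t‖ : ℂ)) ^ 2 = ((∑ l, ((t l).re ^ 2 + (t l).im ^ 2) : ℝ) : ℂ) := by
      rw [← Complex.ofReal_pow, this]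
      congr 1
      refine Finset.sum_congr rfl fun l _ => ?_
      rw [Complex.sq_norm, Complex.normSq_apply]; ring
    rw [h2]
    push_cast
    rw [← Finset.sum_neg_distrib, Finset.sum_div]
    refine Finset.sum_congr rfl fun l _ => ?_
    ring
  rw [e]
  exact (tendsto_finsetProd _ fun l _ => tendsto_cos_pow _).mul
    (tendsto_finsetProd _ fun l _ => tendsto_cos_pow _)

lemma fatou_aux {E : Type*} [NormedAddCommGroup E] [InnerProductSpace ℝ E]
    [FiniteDimensional ℝ E] [MeasurableSpace E] [BorelSpace E] (μ : Measure E) (μs : ℕ → Measure E)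
    [hμ : IsProbabilityMeasure μ] (hμs : ∀ n, IsProbabilityMeasure (μs n))
    (hT : ∀ t, Tendsto (fun n => charFun (μs n) t) atTop (nhds (charFun μ t)))
    {f : E → ℝ} (hf : Continuous f) (h0 : 0 ≤ f) :
    ∫⁻ x, ENNReal.ofReal (f x) ∂μ ≤
      liminf (fun N : ℕ => ∫⁻ x, ENNReal.ofReal (f x) ∂(μs N)) atTop := by
  let νs : ℕ → ProbabilityMeasure E := fun N => ⟨μs N, hμs N⟩
  let ν : ProbabilityMeasure E := ⟨μ, hμ⟩
  have hT : Tendsto νs atTop (nhds ν) :=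
    ProbabilityMeasure.tendsto_iff_tendsto_charFun.2 hT
  refine lintegral_le_liminf_lintegral_of_forall_isOpen_measure_le_liminf_measure
    hf h0 (fun G hG => ?_)
  exact ProbabilityMeasure.le_liminf_measure_open_of_tendsto hT hG

lemma gauss_fatou {f : EuclideanSpace ℂ ι → ℝ} (hf : Continuous f) (h0 : 0 ≤ f) :
    ∫⁻ x, ENNReal.ofReal (f x) ∂(stdGaussian (EuclideanSpace ℂ ι)) ≤
      liminf (fun N : ℕ => ∫⁻ x, ENNReal.ofReal (f x) ∂((uni (Om N ι)).map (SN N))) atTop := by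
  have hμs : ∀ N : ℕ, IsProbabilityMeasure ((uni (Om N ι)).map (SN N)) := fun N =>
    Measure.isProbabilityMeasure_map (measurable_SN N).aemeasurable
  exact fatou_aux _ _ hμs (fun t => tendsto_charFun_SN t) hf h0

lemma gauss_step {f : EuclideanSpace ℂ ι → ℝ} (hf : Continuous f) (h0 : 0 ≤ f) (C : ℝ)
    (N : ℕ) (hC : 𝔼 ω : Om N ι, f (SN N ω) ≤ C) :
    ∫⁻ x, ENNReal.ofReal (f x) ∂((uni (Om N ι)).map (SN N)) ≤ ENNReal.ofReal C := by
  rw [← integral_uni] at hC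
  rw [lintegral_map (by fun_prop) (measurable_SN N),
    ← ofReal_integral_eq_lintegral_ofReal (Integrable.of_finite)
      (Eventually.of_forall fun ω => h0 (SN N ω))]
  exact ENNReal.ofReal_le_ofReal hC

lemma integral_gauss_le {f : EuclideanSpace ℂ ι → ℝ} (hf : Continuous f) (h0 : 0 ≤ f) (C : ℝ)
    (hC0 : 0 ≤ C)
    (hC : ∀ N : ℕ, 0 < N → 𝔼 ω : Om N ι, f (SN N ω) ≤ C) :
    ∫ γ, f γ ∂(stdGaussian (EuclideanSpace ℂ ι)) ≤ C := by
  rw [integral_eq_lintegral_of_nonneg_ae (Eventually.of_forall h0)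
    hf.measurable.aestronglyMeasurable]
  refine ENNReal.toReal_le_of_le_ofReal hC0 ((gauss_fatou hf h0).trans ?_)
  refine liminf_le_of_frequently_le' (Eventually.frequently ?_)
  filter_upwards [eventually_gt_atTop 0] with N hN
  exact gauss_step hf h0 C N (hC N hN)

end P2

section P3
variable {X : Type*} [NormedAddCommGroup X] [NormedSpace ℂ X]
variable {ι : Type*} [Fintype ι] [DecidableEq ι]

/-- Gaussian measure -/
abbrev gm (ι : Type*) [Fintype ι] : Measure (EuclideanSpace ℂ ι) :=
  stdGaussian (EuclideanSpace ℂ ι)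

/-- Gaussian square average. -/
def Gs (z : ι → X) : ℝ := ∫ γ, ‖∑ l, γ l • z l‖ ^ 2 ∂(gm ι)

lemma Gs_cont (z : ι → X) : Continuous fun γ : EuclideanSpace ℂ ι => ‖∑ l, γ l • z l‖ ^ 2 := by
  fun_prop

lemma norm_add_sq_le (a b : X) : ‖a + b‖ ^ 2 ≤ 2 * (‖a‖ ^ 2 + ‖b‖ ^ 2) := by
  have := norm_add_le a b
  nlinarith [sq_nonneg (‖a‖ - ‖b‖), norm_nonneg a, norm_nonneg b, norm_nonneg (a + b)]

lemma SN_sum (N : ℕ) (ω : Om N ι) (z : ι → X) :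
    ∑ l, (SN N ω) l • z l = (((√(N : ℝ))⁻¹ : ℝ) : ℂ) •
      ((∑ p, sgn (ω.1 p) • z p.2) + Complex.I • ∑ p, sgn (ω.2 p) • z p.2) := by
  rw [Fintype.sum_prod_type_right, Fintype.sum_prod_type_right, Finset.smul_sum,
    ← Finset.sum_add_distrib, Finset.smul_sum]
  refine Finset.sum_congr rfl fun l _ => ?_
  simp only [SN]
  rw [mul_smul, Finset.sum_add_distrib, add_smul, Finset.sum_smul, ← Finset.mul_sum, mul_smul,
    Finset.sum_smul]

lemma Gs_le {α : ℝ} (hα : 1 ≤ α) (h : PropAlphaWith X α) (z : ι → X) :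
    Gs z ≤ 4 * α ^ 2 * Rd z := by
  refine integral_gauss_le (Gs_cont z) (fun _ => by positivity) _
    (by have := Rd_nonneg z; positivity) ?_
  intro N hN
  have hN' : (0 : ℝ) < N := by exact_mod_cast hN
  have h1 : ∀ ω : Om N ι, ‖∑ l, (SN N ω) l • z l‖ ^ 2 ≤ (2 / N) *
      (‖∑ p, sgn (ω.1 p) • z p.2‖ ^ 2 + ‖∑ p, sgn (ω.2 p) • z p.2‖ ^ 2) := by
    intro ω
    rw [SN_sum, norm_smul, mul_pow, Complex.norm_real, Real.norm_eq_abs, sq_abs, inv_pow,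
      Real.sq_sqrt hN'.le]
    have := norm_add_sq_le (∑ p, sgn (ω.1 p) • z p.2) (Complex.I • ∑ p, sgn (ω.2 p) • z p.2)
    rw [norm_smul Complex.I, Complex.norm_I, one_mul] at this
    calc _ ≤ (N : ℝ)⁻¹ * _ := mul_le_mul_of_nonneg_left this (by positivity)
      _ = _ := by ring
  have h2 : Rd (fun p : Fin N × ι => z p.2) ≤ α ^ 2 * (N * Rd z) := by
    have := Rd_le_Rd2 hα h (fun (_ : Fin N) l => z l)
    rwa [Rd2_const, Fintype.card_fin] at this
  have h3 : 𝔼 ω : Om N ι, ((2 / N) *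
      (‖∑ p, sgn (ω.1 p) • z p.2‖ ^ 2 + ‖∑ p, sgn (ω.2 p) • z p.2‖ ^ 2)) =
      (2 / N : ℝ) * (2 * Rd (fun p : Fin N × ι => z p.2)) := by
    rw [← Finset.mul_expect, Finset.expect_add_distrib, ← Finset.univ_product_univ,
      Finset.expect_product, Finset.expect_product]
    simp only [Fintype.expect_const]
    rw [two_mul (Rd _)]
    rfl
  refine (Finset.expect_le_expect fun ω _ => h1 ω).trans (h3.le.trans ?_)
  calc (2 / N : ℝ) * (2 * Rd (fun p : Fin N × ι => z p.2))
      ≤ (2 / N : ℝ) * (2 * (α ^ 2 * (N * Rd z))) := by gcongr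
    _ = _ := by field_simp; ring

lemma Gs_unitary (z : ι → X) (u : Matrix ι ι ℂ) (hu : u ∈ Matrix.unitaryGroup ι ℂ) :
    Gs (fun l => ∑ m, u l m • z m) = Gs z := by
  have hu' : u.transpose ∈ Matrix.unitaryGroup ι ℂ := Matrix.transpose_mem_unitaryGroup_iff.2 hu
  have hU : Matrix.toEuclideanCLM (𝕜 := ℂ) u.transpose ∈
      unitary (EuclideanSpace ℂ ι →L[ℂ] EuclideanSpace ℂ ι) := Unitary.map_mem _ hu'
  let e := Unitary.linearIsometryEquiv ⟨_, hU⟩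
  let f : EuclideanSpace ℂ ι ≃ₗᵢ[ℝ] EuclideanSpace ℂ ι :=
    { toLinearEquiv := e.toLinearEquiv.restrictScalars ℝ
      norm_map' := e.norm_map }
  have hf : ∀ γ l, f γ l = ∑ m, u m l * γ m := fun γ l => rfl
  have key := stdGaussian_map f
  unfold Gs
  conv_rhs => rw [gm, ← key]
  rw [integral_map f.continuous.aemeasurable (Gs_cont z).aestronglyMeasurable]
  refine integral_congr_ae (Eventually.of_forall fun γ => ?_)
  simp only [hf]
  congr 2
  simp only [Finset.smul_sum, Finset.sum_smul, smul_smul]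
  rw [Finset.sum_comm]
  refine Finset.sum_congr rfl fun m _ => Finset.sum_congr rfl fun l _ => ?_
  rw [mul_comm]

lemma Gs_sgn (z : ι → X) (ε : ι → Bool) : Gs (fun l => sgn (ε l) • z l) = Gs z := by
  have hu : Matrix.diagonal (fun l => sgn (ε l)) ∈ Matrix.unitaryGroup ι ℂ := by
    rw [Matrix.mem_unitaryGroup_iff, Matrix.star_eq_conjTranspose, Matrix.diagonal_conjTranspose,
      Matrix.diagonal_mul_diagonal, ← Matrix.diagonal_one]
    congr 1
    funext l
    cases h : ε l <;> simp [sgn, h]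
  rw [← Gs_unitary z _ hu]
  congr 1
  funext l
  simp [Matrix.diagonal_apply, ite_smul]

lemma integrable_norm_gm : Integrable (fun γ : EuclideanSpace ℂ ι => ‖γ‖) (gm ι) := by
  have := IsGaussian.memLp_id (gm ι) 1 (by simp)
  exact (memLp_one_iff_integrable.1 this).norm

lemma integrable_norm_sq_gm : Integrable (fun γ : EuclideanSpace ℂ ι => ‖γ‖ ^ 2) (gm ι) := by
  have := IsGaussian.memLp_id (gm ι) 2 (by simp)
  exact this.integrable_norm_pow (by simp)

lemma integrable_of_bound {f : EuclideanSpace ℂ ι → ℝ} (hf : Continuous f) (C : ℝ)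
    (h : ∀ γ, ‖f γ‖ ≤ C * ‖γ‖ ^ 2) : Integrable f (gm ι) :=
  (integrable_norm_sq_gm.const_mul C).mono' hf.aestronglyMeasurable (Eventually.of_forall h)

lemma norm_sum_sq_bound (γ : EuclideanSpace ℂ ι) (c : ι → ℂ) (hc : ∀ l, ‖c l‖ ≤ ‖γ l‖)
    (z : ι → X) : ‖∑ l, c l • z l‖ ^ 2 ≤ (∑ l, ‖z l‖) ^ 2 * ‖γ‖ ^ 2 := by
  rw [← mul_pow]
  refine pow_le_pow_left₀ (norm_nonneg _) ?_ 2
  rw [Finset.sum_mul]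
  refine (norm_sum_le _ _).trans (Finset.sum_le_sum fun l _ => ?_)
  rw [norm_smul, mul_comm]
  exact mul_le_mul_of_nonneg_left ((hc l).trans (PiLp.norm_apply_le γ l)) (norm_nonneg _)

lemma jensen_gm (y : ι → X) :
    ‖∑ l, (((∫ γ, ‖γ l‖ ∂(gm ι)) : ℝ) : ℂ) • y l‖ ^ 2 ≤
      ∫ γ, ‖∑ l, ((‖γ l‖ : ℝ) : ℂ) • y l‖ ^ 2 ∂(gm ι) := by
  let L : (ι → ℝ) →ₗ[ℝ] X := ∑ l, (LinearMap.proj l : (ι → ℝ) →ₗ[ℝ] ℝ).smulRight (y l)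
  have hL : ∀ v, L v = ∑ l, ((v l : ℝ) : ℂ) • y l := by
    intro v
    simp [L, LinearMap.sum_apply]
  let f : EuclideanSpace ℂ ι → (ι → ℝ) := fun γ l => ‖γ l‖
  let g : (ι → ℝ) → ℝ := fun v => ‖L v‖ ^ 2
  have hg : g = fun v => ‖∑ l, ((v l : ℝ) : ℂ) • y l‖ ^ 2 := by
    funext v; simp only [g, hL]
  have hgc : ConvexOn ℝ Set.univ g := by
    have := ((convexOn_norm (E := X) convex_univ).comp_linearMap L).pow (fun _ _ => norm_nonneg _) 2
    simpa using! this
  have hgcont : Continuous g := by rw [hg]; fun_prop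
  have hfc : Continuous f := by fun_prop
  have hfi : Integrable f (gm ι) := by
    refine integrable_norm_gm.mono' hfc.aestronglyMeasurable (Eventually.of_forall fun γ => ?_)
    rw [pi_norm_le_iff_of_nonneg (norm_nonneg _)]
    intro l
    simpa [f] using PiLp.norm_apply_le γ l
  have hgi : Integrable (g ∘ f) (gm ι) := by
    refine integrable_of_bound (hgcont.comp hfc) ((∑ l, ‖y l‖) ^ 2) fun γ => ?_
    simp only [Function.comp, hg, f, Real.norm_eq_abs, abs_pow, abs_norm]
    exact norm_sum_sq_bound γ _ (fun l => by simp) y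
  have := hgc.map_integral_le hgcont.continuousOn isClosed_univ (by simp) hfi hgi
  have hint : ∀ l, (∫ γ, f γ ∂(gm ι)) l = ∫ γ, ‖γ l‖ ∂(gm ι) := by
    intro l
    have := (ContinuousLinearMap.proj (R := ℝ) (φ := fun _ : ι => ℝ) l).integral_comp_comm hfi
    simpa [f] using this.symm
  rw [hg] at this
  simpa only [hint, f] using this

/-- lower constant -/
def cg : ℝ := 1 - Real.exp (-1 / 2)

lemma cg_pos : 0 < cg := by
  have : Real.exp (-1 / 2) < 1 := by rw [← Real.exp_zero]; exact Real.exp_lt_exp.2 (by norm_num)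
  unfold cg; linarith

lemma cg_le (l : ι) : cg ≤ ∫ γ, ‖γ l‖ ∂(gm ι) := by
  let t : EuclideanSpace ℂ ι := EuclideanSpace.single l 1
  have ht : ∀ γ : EuclideanSpace ℂ ι, inner ℝ γ t = (γ l).re := by
    intro γ
    rw [PiLp.inner_apply, Finset.sum_eq_single l]
    · simp [t, Complex.inner]
    · intro j _ hj
      simp [t, hj]
    · simp
  have hi : Integrable (fun γ : EuclideanSpace ℂ ι => ‖γ l‖) (gm ι) := by
    refine integrable_norm_gm.mono' (by fun_prop) (Eventually.of_forall fun γ => ?_)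
    simpa using PiLp.norm_apply_le γ l
  have hi2 : Integrable (fun γ : EuclideanSpace ℂ ι =>
      Complex.exp (((inner ℝ γ t : ℝ) : ℂ) * Complex.I)) (gm ι) := by
    refine (integrable_const (1 : ℝ)).mono' (by fun_prop) (Eventually.of_forall fun γ => ?_)
    rw [Complex.norm_exp_ofReal_mul_I]
  have h1 : ‖charFun (gm ι) t - 1‖ ≤ ∫ γ, ‖γ l‖ ∂(gm ι) := by
    have : charFun (gm ι) t - 1 =
        ∫ γ, (Complex.exp (((inner ℝ γ t : ℝ) : ℂ) * Complex.I) - 1) ∂(gm ι) := by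
      rw [integral_sub hi2 (integrable_const _), charFun_apply]
      simp
    rw [this]
    refine norm_integral_le_of_norm_le hi (Eventually.of_forall fun γ => ?_)
    rw [mul_comm]
    refine Real.norm_exp_I_mul_ofReal_sub_one_le.trans ?_
    rw [ht]
    exact Complex.abs_re_le_norm _
  refine le_trans ?_ h1
  have h2 : charFun (gm ι) t - 1 = ((Real.exp (-1 / 2) - 1 : ℝ) : ℂ) := by
    rw [charFun_stdGaussian]
    simp [t]
  rw [h2, Complex.norm_real, Real.norm_eq_abs, cg, abs_sub_comm]
  exact le_abs_self _

lemma Rd_le_Gs {α : ℝ} (hα : 1 ≤ α) (h : PropAlphaWith X α) (z : ι → X) :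
    Rd z ≤ (α ^ 4 / cg ^ 2) * Gs z := by
  set m : ι → ℝ := fun l => ∫ γ, ‖γ l‖ ∂(gm ι) with hm
  have hm0 : ∀ l, cg ≤ m l := fun l => cg_le l
  have hmp : ∀ l, 0 < m l := fun l => cg_pos.trans_le (hm0 l)
  have hc := cg_pos
  -- contraction
  have h1 : cg ^ 2 * Rd z ≤ α ^ 2 * Rd (fun l => (m l : ℂ) • z l) := by
    have := Rd_contract hα h (fun l => (m l : ℂ) • z l) (fun l => ((cg / m l : ℝ) : ℂ)) (fun l => by
      rw [Complex.norm_real, Real.norm_eq_abs, abs_of_pos (div_pos hc (hmp l))]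
      exact (div_le_one (hmp l)).2 (hm0 l))
    refine le_trans (le_of_eq ?_) this
    unfold Rd
    rw [Finset.mul_expect]
    refine Finset.expect_congr rfl fun ε _ => ?_
    have : ∀ l, sgn (ε l) • ((cg / m l : ℝ) : ℂ) • (m l : ℂ) • z l
        = (cg : ℂ) • sgn (ε l) • z l := by
      intro l
      rw [smul_smul ((cg / m l : ℝ) : ℂ), ← Complex.ofReal_mul, div_mul_cancel₀ _ (hmp l).ne',
        smul_comm]
    simp only [this]
    rw [← Finset.smul_sum, norm_smul, mul_pow, Complex.norm_real, Real.norm_eq_abs, sq_abs]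
  -- Jensen
  have hint : ∀ ε : ι → Bool, Integrable
      (fun γ : EuclideanSpace ℂ ι => ‖∑ l, sgn (ε l) • ((‖γ l‖ : ℝ) : ℂ) • z l‖ ^ 2) (gm ι) := by
    intro ε
    refine integrable_of_bound (by fun_prop) ((∑ l, ‖z l‖) ^ 2) fun γ => ?_
    rw [Real.norm_eq_abs, abs_pow, abs_norm]
    simp only [smul_smul]
    exact norm_sum_sq_bound γ _ (fun l => by simp [norm_sgn]) z
  have hint2 : ∀ ε : ι → Bool, Integrable
      (fun γ : EuclideanSpace ℂ ι => ‖∑ l, sgn (ε l) • γ l • z l‖ ^ 2) (gm ι) := by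
    intro ε
    refine integrable_of_bound (by fun_prop) ((∑ l, ‖z l‖) ^ 2) fun γ => ?_
    rw [Real.norm_eq_abs, abs_pow, abs_norm]
    simp only [smul_smul]
    exact norm_sum_sq_bound γ _ (fun l => by simp [norm_sgn]) z
  have h2 : Rd (fun l => (m l : ℂ) • z l) ≤
      ∫ γ, Rd (fun l => ((‖γ l‖ : ℝ) : ℂ) • z l) ∂(gm ι) := by
    unfold Rd
    simp only [Fintype.expect_eq_sum_div_card]
    rw [integral_div, integral_finsetSum _ fun ε _ => hint ε]
    gcongr with ε
    have := jensen_gm (fun l => sgn (ε l) • z l)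
    simpa only [smul_comm (sgn _)] using this
  have hRi : Integrable (fun γ : EuclideanSpace ℂ ι => Rd (fun l => γ l • z l)) (gm ι) := by
    unfold Rd
    simp only [Fintype.expect_eq_sum_div_card]
    exact (integrable_finsetSum _ fun ε _ => hint2 ε).div_const _
  have hRi0 : Integrable (fun γ : EuclideanSpace ℂ ι =>
      Rd (fun l => ((‖γ l‖ : ℝ) : ℂ) • z l)) (gm ι) := by
    unfold Rd
    simp only [Fintype.expect_eq_sum_div_card]
    exact (integrable_finsetSum _ fun ε _ => hint ε).div_const _
  have h3 : ∫ γ, Rd (fun l => ((‖γ l‖ : ℝ) : ℂ) • z l) ∂(gm ι) ≤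
      ∫ γ, α ^ 2 * Rd (fun l => γ l • z l) ∂(gm ι) := by
    refine integral_mono hRi0 (hRi.const_mul _) fun γ => ?_
    have := Rd_contract hα h (fun l => γ l • z l) (fun l => ((‖γ l‖ : ℝ) : ℂ) / γ l) (fun l => by
      rw [norm_div, Complex.norm_real, norm_norm]
      exact div_self_le_one _)
    refine le_trans (le_of_eq ?_) this
    congr 1
    funext l
    rw [smul_smul]
    by_cases h0 : γ l = 0
    · simp [h0]
    · rw [div_mul_cancel₀ _ h0]
  have h4 : ∫ γ, Rd (fun l => γ l • z l) ∂(gm ι) = Gs z := by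
    unfold Rd
    simp only [Fintype.expect_eq_sum_div_card]
    rw [integral_div, integral_finsetSum _ fun ε _ => hint2 ε]
    have : ∀ ε : ι → Bool, ∫ γ, ‖∑ l, sgn (ε l) • γ l • z l‖ ^ 2 ∂(gm ι) = Gs z := by
      intro ε
      rw [← Gs_sgn z ε]
      simp only [smul_comm (sgn _)]
      rfl
    simp only [this]
    simp
  rw [integral_const_mul, h4] at h3
  rw [div_mul_eq_mul_div, le_div_iff₀ (by positivity), mul_comm]
  calc _ ≤ _ := h1
    _ ≤ α ^ 2 * (α ^ 2 * Gs z) := by gcongr; exact h2.trans h3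
    _ = _ := by ring

lemma Rd_unitary {α : ℝ} (hα : 1 ≤ α) (h : PropAlphaWith X α) (z : ι → X)
    (u : Matrix ι ι ℂ) (hu : u ∈ Matrix.unitaryGroup ι ℂ) :
    Rd (fun l => ∑ m, u l m • z m) ≤ (4 * α ^ 6 / cg ^ 2) * Rd z := by
  have hc := cg_pos
  calc _ ≤ _ := Rd_le_Gs hα h _
    _ = (α ^ 4 / cg ^ 2) * Gs z := by rw [Gs_unitary z u hu]
    _ ≤ (α ^ 4 / cg ^ 2) * (4 * α ^ 2 * Rd z) := by gcongr; exact Gs_le hα h z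
    _ = _ := by ring

end P3

section P4
variable {X : Type*} [NormedAddCommGroup X] [NormedSpace ℂ X]
variable {ι : Type*} [Fintype ι] [DecidableEq ι]

lemma Rd_smul (c : ℂ) (x : ι → X) : Rd (fun i => c • x i) = ‖c‖ ^ 2 * Rd x := by
  unfold Rd
  rw [Finset.mul_expect]
  refine Finset.expect_congr rfl fun ε _ => ?_
  rw [← mul_pow, ← norm_smul, Finset.smul_sum]
  congr 3; ext i; rw [smul_comm]

lemma Rd_add (x y : ι → X) : Rd (fun i => x i + y i) ≤ 2 * (Rd x + Rd y) := by
  unfold Rd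
  rw [← Finset.expect_add_distrib, Finset.mul_expect]
  refine Finset.expect_le_expect fun ε _ => ?_
  simp only [smul_add, Finset.sum_add_distrib]
  exact norm_add_sq_le _ _

lemma exists_four (a : Matrix ι ι ℂ) : ∃ u : Fin 4 → Matrix ι ι ℂ, ∃ c : Fin 4 → ℂ,
    (∀ i, u i ∈ Matrix.unitaryGroup ι ℂ) ∧ a = ∑ i, c i • u i ∧ ∀ i, ‖c i‖ ≤ matOpNorm a / 2 := by
  obtain ⟨u, c, h1, h2⟩ := CStarAlgebra.exists_sum_four_unitary
    (Matrix.toEuclideanCLM (n := ι) (𝕜 := ℂ) a)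
  refine ⟨fun i => (Matrix.toEuclideanCLM (n := ι) (𝕜 := ℂ)).symm (u i), c, fun i => ?_, ?_, h2⟩
  · have hT := fun x => (Matrix.toEuclideanCLM (n := ι) (𝕜 := ℂ)).symm.map_star' x
    have h3 := (u i).2
    rw [Unitary.mem_iff] at h3
    rw [Matrix.mem_unitaryGroup_iff]
    have e := congrArg (Matrix.toEuclideanCLM (n := ι) (𝕜 := ℂ)).symm h3.2
    rw [map_mul, map_one] at e
    have e2 : (Matrix.toEuclideanCLM (n := ι) (𝕜 := ℂ)).symm (star (u i).1) =
      star ((Matrix.toEuclideanCLM (n := ι) (𝕜 := ℂ)).symm (u i).1) := hT _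
    rw [e2] at e
    exact e
  · have e := congrArg (Matrix.toEuclideanCLM (n := ι) (𝕜 := ℂ)).symm h1
    rw [StarAlgEquiv.symm_apply_apply, map_sum] at e
    simpa only [map_smul] using e

lemma Rd_matrix {α : ℝ} (hα : 1 ≤ α) (h : PropAlphaWith X α) (z : ι → X) (a : Matrix ι ι ℂ) :
    Rd (fun l => ∑ m, a l m • z m) ≤ (16 * α^6 / cg^2) * (matOpNorm a) ^ 2 * Rd z := by
  obtain ⟨u, c, hu, ha, hc⟩ := exists_four a
  have hA : 0 ≤ matOpNorm a := norm_nonneg _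
  have key : ∀ i, Rd (fun l => c i • ∑ m, u i l m • z m) ≤
      (α^6 / cg^2) * (matOpNorm a) ^ 2 * Rd z := fun i => by
    rw [Rd_smul]
    calc _ ≤ (matOpNorm a / 2) ^ 2 * ((4 * α^6 / cg^2) * Rd z) := by
          gcongr
          · exact Rd_nonneg _
          · exact hc i
          · exact Rd_unitary hα h z (u i) (hu i)
      _ = _ := by ring
  have e : (fun l => ∑ m, a l m • z m) = fun l =>
      ((c 0 • ∑ m, u 0 l m • z m) + (c 1 • ∑ m, u 1 l m • z m)) +
      ((c 2 • ∑ m, u 2 l m • z m) + (c 3 • ∑ m, u 3 l m • z m)) := by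
    ext l
    conv_lhs => rw [ha]
    simp only [Matrix.sum_apply, Matrix.smul_apply, Fin.sum_univ_four, Matrix.add_apply, add_smul,
      Finset.sum_add_distrib, Finset.smul_sum, smul_assoc]
    abel
  rw [e]
  have h1 := Rd_add (fun l => (c 0 • ∑ m, u 0 l m • z m) + (c 1 • ∑ m, u 1 l m • z m))
    (fun l => (c 2 • ∑ m, u 2 l m • z m) + (c 3 • ∑ m, u 3 l m • z m))
  have h2 := Rd_add (fun l => (c 0 • ∑ m, u 0 l m • z m)) (fun l => (c 1 • ∑ m, u 1 l m • z m))
  have h3 := Rd_add (fun l => (c 2 • ∑ m, u 2 l m • z m)) (fun l => (c 3 • ∑ m, u 3 l m • z m))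
  have := key 0
  have := key 1
  have := key 2
  have := key 3
  calc _ ≤ _ := h1
    _ ≤ 16 * ((α^6 / cg^2) * (matOpNorm a) ^ 2 * Rd z) := by linarith
    _ = _ := by ring

end P4

section P5
variable {X : Type*} [NormedAddCommGroup X] [NormedSpace ℂ X]

lemma matOpNorm_unitary {ι : Type*} [Fintype ι] [DecidableEq ι] (u : Matrix ι ι ℂ)
    (hu : star u * u = 1) : matOpNorm u ≤ 1 := by
  have hT : (Matrix.toEuclideanCLM (n := ι) (𝕜 := ℂ)) (star u) =
      star ((Matrix.toEuclideanCLM (n := ι) (𝕜 := ℂ)) u) :=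
    (Matrix.toEuclideanCLM (n := ι) (𝕜 := ℂ)).map_star' u
  have e := congrArg (Matrix.toEuclideanCLM (n := ι) (𝕜 := ℂ)) hu
  rw [map_mul, map_one, hT] at e
  have h1 : ‖Matrix.toEuclideanCLM (n := ι) (𝕜 := ℂ) u‖ * ‖Matrix.toEuclideanCLM (n := ι) (𝕜 := ℂ) u‖ ≤ 1 := by
    rw [← CStarRing.norm_star_mul_self, e]
    exact ContinuousLinearMap.norm_id_le
  unfold matOpNorm
  nlinarith [norm_nonneg (Matrix.toEuclideanCLM (n := ι) (𝕜 := ℂ) u)]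

variable {N : ℕ} {nk : Fin N → ℕ}

/-- Matrix units indexed by pairs of the sigma type. -/
def Eu (p q : Σ k, Fin (nk k)) : ∀ k, Matrix (Fin (nk k)) (Fin (nk k)) ℂ :=
  fun k => Matrix.of fun i j => if p = ⟨k, i⟩ ∧ q = ⟨k, j⟩ then 1 else 0

lemma Eu_sum (c : (Σ k, Fin (nk k)) → (Σ k, Fin (nk k)) → ℂ) (k : Fin N) (i j : Fin (nk k)) :
    (∑ p, ∑ q, c p q • Eu p q) k i j = c ⟨k, i⟩ ⟨k, j⟩ := by
  simp only [Finset.sum_apply, Matrix.sum_apply, Pi.smul_apply, Matrix.smul_apply, Eu, Matrix.of_apply]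
  rw [Finset.sum_eq_single ⟨k, i⟩, Finset.sum_eq_single ⟨k, j⟩]
  · simp
  · intro b _ hb
    simp [hb]
  · simp
  · intro b _ hb
    simp [hb]
  · simp

lemma Eu_mul (p : Σ k, Fin (nk k)) (k : Fin N) (j : Fin (nk k))
    (a : ∀ k, Matrix (Fin (nk k)) (Fin (nk k)) ℂ) :
    Eu p ⟨k, j⟩ * a = ∑ j', a k j j' • Eu p ⟨k, j'⟩ := by
  funext k'
  ext i j''
  simp only [Finset.sum_apply, Matrix.sum_apply, Pi.smul_apply, Matrix.smul_apply, Pi.mul_apply,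
    Matrix.mul_apply, Eu, Matrix.of_apply]
  by_cases hk : k = k'
  · subst hk
    by_cases hp : p = ⟨k, i⟩
    · simp [hp]
    · simp [hp]
  · simp [hk]

/-- DFT phases. -/
def ph (p q : Σ k, Fin (nk k)) : ℂ :=
  Complex.exp (2 * Real.pi * Complex.I / (nk p.1)) ^ ((p.2 : ℕ) * (q.2 : ℕ))

lemma norm_zeta (n : ℕ) : ‖Complex.exp (2 * Real.pi * Complex.I / n)‖ = 1 := by
  have : (2 * Real.pi * Complex.I / n : ℂ) = ((2 * Real.pi / n : ℝ) : ℂ) * Complex.I := by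
    push_cast; ring
  rw [this, Complex.norm_exp_ofReal_mul_I]

lemma norm_ph (p q : Σ k, Fin (nk k)) : ‖ph p q‖ = 1 := by
  unfold ph; rw [norm_pow, norm_zeta, one_pow]

lemma dft_orth (n : ℕ) (hn : 0 < n) (i j : Fin n) :
    ∑ l : Fin n, star (Complex.exp (2 * Real.pi * Complex.I / n) ^ ((l : ℕ) * (i : ℕ))) *
      (Complex.exp (2 * Real.pi * Complex.I / n) ^ ((l : ℕ) * (j : ℕ))) =
    if i = j then (n : ℂ) else 0 := by
  set ζ := Complex.exp (2 * Real.pi * Complex.I / n) with hζ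
  have hp : IsPrimitiveRoot ζ n := Complex.isPrimitiveRoot_exp n hn.ne'
  have h1 : ‖ζ‖ = 1 := norm_zeta n
  have h0 : star ζ * ζ = 1 := by
    rw [Complex.star_def, Complex.conj_mul', h1]; norm_num
  set x := star ζ ^ (i : ℕ) * ζ ^ (j : ℕ) with hx
  have e : ∀ l : Fin n, star (ζ ^ ((l : ℕ) * (i : ℕ))) * ζ ^ ((l : ℕ) * (j : ℕ)) = x ^ (l : ℕ) := by
    intro l
    rw [hx, mul_pow, ← pow_mul, ← pow_mul, star_pow, mul_comm (l : ℕ), mul_comm (l : ℕ)]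
  simp only [e]
  split_ifs with hij
  · subst hij
    have : x = 1 := by rw [hx, ← mul_pow, h0, one_pow]
    simp [this]
  · have hx1 : x ≠ 1 := by
      intro h
      apply hij
      have : ζ ^ (j : ℕ) = ζ ^ (i : ℕ) := by
        calc ζ ^ (j : ℕ) = (star ζ * ζ) ^ (i : ℕ) * ζ ^ (j : ℕ) := by rw [h0]; simp
          _ = x * ζ ^ (i : ℕ) := by rw [hx, mul_pow]; ring
          _ = _ := by rw [h, one_mul]
      exact (Fin.ext (hp.pow_inj j.2 i.2 this)).symm
    have hxn : x ^ n = 1 := by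
      rw [hx, mul_pow, ← pow_mul, ← pow_mul, mul_comm (i : ℕ), mul_comm (j : ℕ), pow_mul, pow_mul,
        ← star_pow, hp.pow_eq_one]; simp
    have hs : ∑ l ∈ Finset.range n, x ^ l = 0 := by
      rw [geom_sum_eq hx1, hxn]; simp
    rw [← hs, Finset.sum_range]

/-- The scale factor. -/
def sc (nk : Fin N → ℕ) (k : Fin N) : ℂ := ((√(nk k : ℝ))⁻¹ : ℝ)

lemma sc_sq (hnk : ∀ k, 0 < nk k) (k : Fin N) : star (sc nk k) * sc nk k * (nk k : ℂ) = 1 := by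
  unfold sc
  rw [Complex.star_def, Complex.conj_ofReal]
  have h : (0 : ℝ) < nk k := by exact_mod_cast hnk k
  have : (√(nk k : ℝ))⁻¹ * (√(nk k : ℝ))⁻¹ * (nk k : ℝ) = 1 := by
    rw [← mul_inv, Real.mul_self_sqrt h.le, inv_mul_cancel₀ h.ne']
  exact_mod_cast this

/-- The flat unitaries. -/
def Uf (ε η : (Σ k, Fin (nk k)) → Bool) : ∀ k, Matrix (Fin (nk k)) (Fin (nk k)) ℂ :=
  ∑ p, ∑ q, ((sgn (ε p) * sgn (η q)) * (ph p q * sc nk p.1)) • Eu p q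

lemma star_sgn (b : Bool) : star (sgn b) = sgn b := by cases b <;> simp [sgn]

lemma Uf_star_mul (hnk : ∀ k, 0 < nk k) (ε η : (Σ k, Fin (nk k)) → Bool) :
    star (Uf ε η) * Uf ε η = 1 := by
  funext k
  ext i j
  rw [Pi.mul_apply, Matrix.mul_apply, Pi.star_apply]
  simp only [Matrix.star_apply]
  unfold Uf
  simp only [Eu_sum, ph]
  have : ∀ l : Fin (nk k), star (sgn (ε ⟨k, l⟩) * sgn (η ⟨k, i⟩) *
      (Complex.exp (2 * Real.pi * Complex.I / (nk k)) ^ ((l : ℕ) * (i : ℕ)) * sc nk k)) *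
      (sgn (ε ⟨k, l⟩) * sgn (η ⟨k, j⟩) *
      (Complex.exp (2 * Real.pi * Complex.I / (nk k)) ^ ((l : ℕ) * (j : ℕ)) * sc nk k)) =
      (sgn (η ⟨k, i⟩) * sgn (η ⟨k, j⟩) * (star (sc nk k) * sc nk k)) *
      (star (Complex.exp (2 * Real.pi * Complex.I / (nk k)) ^ ((l : ℕ) * (i : ℕ))) *
      (Complex.exp (2 * Real.pi * Complex.I / (nk k)) ^ ((l : ℕ) * (j : ℕ)))) := by
    intro l
    rw [star_mul', star_mul', star_mul', star_sgn, star_sgn]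
    linear_combination (sgn (η ⟨k, i⟩) * sgn (η ⟨k, j⟩) * (star (sc nk k) * sc nk k)) *
      (star (Complex.exp (2 * Real.pi * Complex.I / (nk k)) ^ ((l : ℕ) * (i : ℕ))) *
      (Complex.exp (2 * Real.pi * Complex.I / (nk k)) ^ ((l : ℕ) * (j : ℕ)))) *
      sgn_mul_self (ε ⟨k, l⟩)
  simp only [this]
  rw [← Finset.mul_sum, dft_orth _ (hnk k)]
  by_cases hij : i = j
  · subst hij
    rw [if_pos rfl, sgn_mul_self, one_mul, sc_sq hnk]
    simp
  · rw [if_neg hij]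
    simp [hij]

variable (w : (∀ k, Matrix (Fin (nk k)) (Fin (nk k)) ℂ) →ₗ[ℂ] (X →L[ℂ] X))

/-- The normalised operators. -/
def bb (p q : Σ k, Fin (nk k)) : X →L[ℂ] X := sc nk p.1 • w (Eu p q)

lemma w_Uf (ε η : (Σ k, Fin (nk k)) → Bool) (x : X) :
    w (Uf ε η) x = ∑ p, ∑ q, (sgn (ε p) * sgn (η q)) • (ph p q • bb w p q x) := by
  unfold Uf bb
  simp only [map_sum, map_smul, ContinuousLinearMap.sum_apply, ContinuousLinearMap.smul_apply,
    smul_smul, mul_assoc]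

lemma bb_mul (hmul : ∀ a b, w (a * b) = w a * w b) (p : Σ k, Fin (nk k)) (k : Fin N)
    (j : Fin (nk k)) (a : ∀ k, Matrix (Fin (nk k)) (Fin (nk k)) ℂ) (x : X) :
    bb w p ⟨k, j⟩ (w a x) = ∑ j', a k j j' • bb w p ⟨k, j'⟩ x := by
  unfold bb
  have : w (Eu p ⟨k, j⟩) (w a x) = w (Eu p ⟨k, j⟩ * a) x := by rw [hmul]; rfl
  rw [ContinuousLinearMap.smul_apply, this, Eu_mul]
  simp only [map_sum, map_smul, ContinuousLinearMap.sum_apply, ContinuousLinearMap.smul_apply,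
    Finset.smul_sum]
  refine Finset.sum_congr rfl fun j' _ => ?_
  rw [smul_comm]

lemma Uf_norm (hnk : ∀ k, 0 < nk k) (ε η : (Σ k, Fin (nk k)) → Bool) (k : Fin N) :
    matOpNorm (Uf ε η k) ≤ 1 :=
  matOpNorm_unitary _ (congrFun (Uf_star_mul hnk ε η) k)

lemma Uf_norm_star (hnk : ∀ k, 0 < nk k) (ε η : (Σ k, Fin (nk k)) → Bool) (k : Fin N) :
    matOpNorm (star (Uf ε η) k) ≤ 1 := by
  refine matOpNorm_unitary _ ?_
  rw [Pi.star_apply, star_star]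
  exact mul_eq_one_comm.1 (congrFun (Uf_star_mul hnk ε η) k)

lemma Rd2_upper {α : ℝ} (hα : 1 ≤ α) (h : PropAlphaWith X α) (hnk : ∀ k, 0 < nk k) {C : ℝ}
    (hC : ∀ a, (∀ k, matOpNorm (a k) ≤ 1) → ‖w a‖ ≤ C) (x : X) :
    Rd2 (fun p q => bb w p q x) ≤ α ^ 2 * C ^ 2 * ‖x‖ ^ 2 := by
  have e : (fun p q => bb w p q x) = fun p q => star (ph p q) • (ph p q • bb w p q x) := by
    funext p q
    rw [smul_smul, Complex.star_def, Complex.conj_mul', norm_ph]; simp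
  rw [e]
  refine (alpha_gen hα h _ (fun p q => star (ph p q)) fun p q => by rw [norm_star, norm_ph]).trans ?_
  rw [mul_assoc]
  gcongr
  unfold Rd2
  refine Finset.expect_le Finset.univ_nonempty fun ε _ => ?_
  refine Finset.expect_le Finset.univ_nonempty fun η _ => ?_
  rw [← w_Uf, ← mul_pow]
  gcongr
  exact (ContinuousLinearMap.le_opNorm _ _).trans
    (mul_le_mul_of_nonneg_right (hC _ fun k => Uf_norm hnk ε η k) (norm_nonneg _))

lemma Rd2_lower {α : ℝ} (hα : 1 ≤ α) (h : PropAlphaWith X α) (hnk : ∀ k, 0 < nk k) {C : ℝ}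
    (hmul : ∀ a b, w (a * b) = w a * w b) (hone : w 1 = 1)
    (hC : ∀ a, (∀ k, matOpNorm (a k) ≤ 1) → ‖w a‖ ≤ C) (x : X) :
    ‖x‖ ^ 2 ≤ α ^ 2 * C ^ 2 * Rd2 (fun p q => bb w p q x) := by
  have h1 := alpha_gen hα h (fun p q => bb w p q x) (fun p q => ph p q) fun p q => (norm_ph p q).le
  have h2 : ‖x‖ ^ 2 ≤ C ^ 2 * Rd2 (fun p q => ph p q • bb w p q x) := by
    unfold Rd2
    rw [Finset.mul_expect]
    refine Finset.le_expect Finset.univ_nonempty fun ε _ => ?_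
    rw [Finset.mul_expect]
    refine Finset.le_expect Finset.univ_nonempty fun η _ => ?_
    rw [← w_Uf, ← mul_pow]
    gcongr
    have : x = w (star (Uf ε η)) (w (Uf ε η) x) := by
      rw [← ContinuousLinearMap.mul_apply, ← hmul, Uf_star_mul hnk, hone]; rfl
    conv_lhs => rw [this]
    exact (ContinuousLinearMap.le_opNorm _ _).trans
      (mul_le_mul_of_nonneg_right (hC _ fun k => Uf_norm_star hnk ε η k) (norm_nonneg _))
  calc _ ≤ _ := h2
    _ ≤ C ^ 2 * (α ^ 2 * Rd2 (fun p q => bb w p q x)) := by gcongr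
    _ = _ := by ring

end P5

section P6
variable {X : Type*} [NormedAddCommGroup X] [NormedSpace ℂ X]

lemma matOpNorm_block {N : ℕ} {ι : Fin N → Type*} [∀ k, Fintype (ι k)] [∀ k, DecidableEq (ι k)]
    (M : ∀ k, Matrix (ι k) (ι k) ℂ) : 
    matOpNorm (Matrix.blockDiagonal' M) ≤ ⨆ k, matOpNorm (M k) := by
  set S := ⨆ k, matOpNorm (M k) with hS
  have hS0 : 0 ≤ S := Real.iSup_nonneg fun k => norm_nonneg _
  have hk : ∀ k, matOpNorm (M k) ≤ S := fun k =>
    le_ciSup (f := fun k => matOpNorm (M k)) (Set.finite_range _).bddAbove k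
  refine ContinuousLinearMap.opNorm_le_bound _ hS0 fun v => ?_
  refine (sq_le_sq₀ (norm_nonneg _) (by positivity)).1 ?_
  rw [mul_pow, EuclideanSpace.norm_sq_eq, EuclideanSpace.norm_sq_eq, Fintype.sum_sigma,
    Fintype.sum_sigma, Finset.mul_sum]
  refine Finset.sum_le_sum fun k _ => ?_
  let vk : EuclideanSpace ℂ (ι k) := WithLp.toLp 2 fun i => v ⟨k, i⟩
  have h1 : ‖Matrix.toEuclideanCLM (𝕜 := ℂ) (M k) vk‖ ≤ S * ‖vk‖ :=
    (ContinuousLinearMap.le_opNorm _ _).trans (mul_le_mul_of_nonneg_right (hk k) (norm_nonneg _))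
  have h2 : ‖Matrix.toEuclideanCLM (𝕜 := ℂ) (M k) vk‖ ^ 2 ≤ (S * ‖vk‖) ^ 2 := by gcongr
  rw [mul_pow, EuclideanSpace.norm_sq_eq, EuclideanSpace.norm_sq_eq] at h2
  refine le_trans (le_of_eq ?_) h2
  refine Finset.sum_congr rfl fun i _ => ?_
  congr 2
  rw [Matrix.ofLp_toEuclideanCLM, Matrix.ofLp_toEuclideanCLM]
  simp only [Matrix.mulVec, dotProduct, Fintype.sum_sigma]
  rw [Finset.sum_eq_single k]
  · simp [vk, Matrix.blockDiagonal'_apply_eq]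
  · intro k' _ hk'
    refine Finset.sum_eq_zero fun j _ => ?_
    rw [Matrix.blockDiagonal'_apply_ne _ _ _ hk'.symm, zero_mul]
  · simp

variable {N : ℕ} {nk : Fin N → ℕ}
variable (w : (∀ k, Matrix (Fin (nk k)) (Fin (nk k)) ℂ) →ₗ[ℂ] (X →L[ℂ] X))

lemma swap_id {n : ℕ} (y : Fin n → X) :
    (Finset.univ.expect fun δ : Fin n → Bool => Rd2 (fun p q => bb w p q (∑ l, sgn (δ l) • y l))) =
    Finset.univ.expect fun ε : (Σ k, Fin (nk k)) → Bool =>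
      Rd2 (fun q l => ∑ p, sgn (ε p) • bb w p q (y l)) := by
  unfold Rd2
  rw [Finset.expect_comm]
  refine Finset.expect_congr rfl fun ε _ => ?_
  rw [Finset.expect_comm]
  refine Finset.expect_congr rfl fun η _ => ?_
  refine Finset.expect_congr rfl fun δ _ => ?_
  congr 2
  simp only [map_sum, map_smul, Finset.smul_sum, smul_smul]
  rw [Finset.sum_comm]
  refine Finset.sum_congr rfl fun q _ => ?_
  rw [Finset.sum_comm]
  refine Finset.sum_congr rfl fun l _ => ?_
  refine Finset.sum_congr rfl fun p _ => ?_
  congr 1; ring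

/-- Reindexing. -/
def eQ (nk : Fin N → ℕ) (n : ℕ) : (Σ k, Fin n × Fin (nk k)) ≃ (Σ k, Fin (nk k)) × Fin n where
  toFun r := (⟨r.1, r.2.2⟩, r.2.1)
  invFun r := ⟨r.1.1, (r.2, r.1.2)⟩
  left_inv _ := rfl
  right_inv _ := rfl

lemma step_mat {α : ℝ} (hα : 1 ≤ α) (h : PropAlphaWith X α)
    (hmul : ∀ a b, w (a * b) = w a * w b) {n : ℕ}
    (a : Fin n → Fin n → ∀ k, Matrix (Fin (nk k)) (Fin (nk k)) ℂ) (x : Fin n → X)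
    (ε : (Σ k, Fin (nk k)) → Bool) :
    Rd2 (fun q l => ∑ p, sgn (ε p) • bb w p q (∑ m, w (a l m) (x m))) ≤
      α ^ 4 * ((16 * α^6 / cg^2) * (⨆ k : Fin N, matOpNorm (Matrix.of
              fun (p q : Fin n × Fin (nk k)) => a p.1 q.1 k p.2 q.2)) ^ 2) *
      Rd2 (fun q l => ∑ p, sgn (ε p) • bb w p q (x l)) := by
  set S := ⨆ k : Fin N, matOpNorm (Matrix.of
              fun (p q : Fin n × Fin (nk k)) => a p.1 q.1 k p.2 q.2) with hS
  set M : ∀ k, Matrix (Fin n × Fin (nk k)) (Fin n × Fin (nk k)) ℂ := fun k => Matrix.of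
              fun (p q : Fin n × Fin (nk k)) => a p.1 q.1 k p.2 q.2 with hM
  have hb : matOpNorm (Matrix.blockDiagonal' M) ≤ S := matOpNorm_block M
  have hb0 : 0 ≤ matOpNorm (Matrix.blockDiagonal' M) := norm_nonneg _
  let z : (Σ k, Fin (nk k)) → Fin n → X := fun q l => ∑ p, sgn (ε p) • bb w p q (x l)
  let z' : (Σ k, Fin (nk k)) → Fin n → X :=
    fun q l => ∑ p, sgn (ε p) • bb w p q (∑ m, w (a l m) (x m))
  let Z : (Σ k, Fin n × Fin (nk k)) → X := fun r => z (eQ nk n r).1 (eQ nk n r).2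
  have e1 : Rd (fun r : (Σ k, Fin (nk k)) × Fin n => z r.1 r.2) = Rd Z :=
    (Rd_equiv (eQ nk n) (fun r : (Σ k, Fin (nk k)) × Fin n => z r.1 r.2)).symm
  have e2 : Rd (fun r : (Σ k, Fin (nk k)) × Fin n => z' r.1 r.2) =
      Rd (fun r => ∑ r', Matrix.blockDiagonal' M r r' • Z r') := by
    rw [← Rd_equiv (eQ nk n) (fun r : (Σ k, Fin (nk k)) × Fin n => z' r.1 r.2)]
    congr 1
    funext r
    obtain ⟨k, l, j⟩ := r
    rw [Fintype.sum_sigma, Finset.sum_eq_single k]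
    · simp only [Matrix.blockDiagonal'_apply_eq, hM, Matrix.of_apply, eQ, Z, z, z', Equiv.coe_fn_mk,
        map_sum, bb_mul w hmul, Fintype.sum_prod_type, Finset.smul_sum]
      rw [Finset.sum_comm]
      refine Finset.sum_congr rfl fun m _ => ?_
      rw [Finset.sum_comm]
      refine Finset.sum_congr rfl fun j' _ => ?_
      refine Finset.sum_congr rfl fun p _ => ?_
      rw [smul_comm]
    · intro k' _ hk'
      refine Finset.sum_eq_zero fun j _ => ?_
      rw [Matrix.blockDiagonal'_apply_ne _ _ _ hk'.symm, zero_smul]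
    · simp
  have hc := cg_pos
  have hα0 : 0 ≤ α := by linarith
  calc Rd2 z' ≤ α ^ 2 * Rd (fun r : (Σ k, Fin (nk k)) × Fin n => z' r.1 r.2) := Rd2_le_Rd hα h _
    _ ≤ α ^ 2 * ((16 * α^6 / cg^2) * (matOpNorm (Matrix.blockDiagonal' M)) ^ 2 * Rd Z) := by
        rw [e2]
        gcongr
        exact Rd_matrix hα h Z _
    _ ≤ α ^ 2 * ((16 * α^6 / cg^2) * S ^ 2 * (α ^ 2 * Rd2 z)) := by
        have := Rd_le_Rd2 hα h z
        rw [e1] at this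
        gcongr
        exact Rd_nonneg _
    _ = _ := by ring

lemma main_sq {α : ℝ} (hα : 1 ≤ α) (h : PropAlphaWith X α) (hnk : ∀ k, 0 < nk k) {C : ℝ}
    (hmul : ∀ a b, w (a * b) = w a * w b) (hone : w 1 = 1)
    (hC : ∀ a, (∀ k, matOpNorm (a k) ≤ 1) → ‖w a‖ ≤ C) {n : ℕ}
    (a : Fin n → Fin n → ∀ k, Matrix (Fin (nk k)) (Fin (nk k)) ℂ) (x : Fin n → X) :
    Rd (fun l => ∑ m, w (a l m) (x m)) ≤
      (4 * α ^ 7 / cg * C ^ 2 * (⨆ k : Fin N, matOpNorm (Matrix.of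
              fun (p q : Fin n × Fin (nk k)) => a p.1 q.1 k p.2 q.2))) ^ 2 * Rd x := by
  set S := ⨆ k : Fin N, matOpNorm (Matrix.of
              fun (p q : Fin n × Fin (nk k)) => a p.1 q.1 k p.2 q.2) with hS
  have hc := cg_pos
  have hα0 : 0 ≤ α := by linarith
  have h1 : Rd (fun l => ∑ m, w (a l m) (x m)) ≤ α ^ 2 * C ^ 2 *
      Finset.univ.expect fun δ : Fin n → Bool => Rd2 (fun p q => bb w p q
        (∑ l, sgn (δ l) • ∑ m, w (a l m) (x m))) := by
    conv_lhs => unfold Rd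
    rw [Finset.mul_expect]
    exact Finset.expect_le_expect fun δ _ => Rd2_lower w hα h hnk hmul hone hC _
  have h2 : (Finset.univ.expect fun δ : Fin n → Bool => Rd2 (fun p q => bb w p q
        (∑ l, sgn (δ l) • x l))) ≤ α ^ 2 * C ^ 2 * Rd x := by
    conv_rhs => unfold Rd
    rw [Finset.mul_expect]
    exact Finset.expect_le_expect fun δ _ => Rd2_upper w hα h hnk hC _
  have h3 : (Finset.univ.expect fun δ : Fin n → Bool => Rd2 (fun p q => bb w p q
        (∑ l, sgn (δ l) • ∑ m, w (a l m) (x m)))) ≤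
      α ^ 4 * ((16 * α^6 / cg^2) * S ^ 2) *
      Finset.univ.expect fun δ : Fin n → Bool => Rd2 (fun p q => bb w p q
        (∑ l, sgn (δ l) • x l)) := by
    rw [swap_id w x, swap_id w (fun l => ∑ m, w (a l m) (x m)), Finset.mul_expect]
    exact Finset.expect_le_expect fun ε _ => step_mat w hα h hmul a x ε
  calc _ ≤ _ := h1
    _ ≤ α ^ 2 * C ^ 2 * (α ^ 4 * ((16 * α^6 / cg^2) * S ^ 2) * (α ^ 2 * C ^ 2 * Rd x)) := by
        refine mul_le_mul_of_nonneg_left (h3.trans ?_) (by positivity)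
        exact mul_le_mul_of_nonneg_left h2 (by positivity)
    _ = _ := by ring

end P6

/-- Theorem 5.1 for finite dimensional C*-algebras: on a Banach space with
property (α), every bounded unital homomorphism `w : ⊕_k M_{n_k}(ℂ) → B(X)` is
matricially R-bounded, with `‖w‖_{mat,R} ≤ K ‖w‖²`. The norm of a matrix
`[a_{ij}] ∈ M_n(A)` is the maximum over `k` of the operator norms of the
`n·n_k × n·n_k` block matrices. -/
theorem finiteDim_hom_matricially_R_bounded (α : ℝ) (hα : 1 ≤ α) :
    ∃ K : ℝ, 1 ≤ K ∧
      ∀ (X : Type u) (_ : NormedAddCommGroup X) (_ : NormedSpace ℂ X),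
      PropAlphaWith X α →
      ∀ (N : ℕ) (nk : Fin N → ℕ) (_ : ∀ k, 0 < nk k)
        (w : (∀ k, Matrix (Fin (nk k)) (Fin (nk k)) ℂ) → (X →L[ℂ] X)),
        (∀ a b, w (a + b) = w a + w b) →
        (∀ (c : ℂ) a, w (c • a) = c • w a) →
        (∀ a b, w (a * b) = w a * w b) →
        (w 1 = 1) →
      ∀ Cw : ℝ,
        (∀ a, ‖w a‖ ≤ Cw * ⨆ k, matOpNorm (a k)) →
        (∀ C' : ℝ, (∀ a, ‖w a‖ ≤ C' * ⨆ k, matOpNorm (a k)) → Cw ≤ C') →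
      ∀ (n : ℕ) (a : Fin n → Fin n → ∀ k, Matrix (Fin (nk k)) (Fin (nk k)) ℂ)
        (x : Fin n → X),
        radNorm (fun i => ∑ j, w (a i j) (x j)) ≤
          K * Cw ^ 2 *
            (⨆ k : Fin N, matOpNorm (Matrix.of
              fun (p q : Fin n × Fin (nk k)) => a p.1 q.1 k p.2 q.2)) *
            radNorm x := by
  have hc := cg_pos
  have hα0 : 0 ≤ α := by linarith
  refine ⟨1 + 4 * α ^ 7 / cg, by have : 0 ≤ 4 * α ^ 7 / cg := by positivity
                                 linarith, ?_⟩
  intro X _ _ hX N nk hnk w hadd hsmul hmul hone Cw hCw _ n a x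
  set S := ⨆ k : Fin N, matOpNorm (Matrix.of
              fun (p q : Fin n × Fin (nk k)) => a p.1 q.1 k p.2 q.2) with hS
  have hS0 : 0 ≤ S := Real.iSup_nonneg fun k => norm_nonneg _
  have hx0 : 0 ≤ radNorm x := Real.sqrt_nonneg _
  have hK : 0 ≤ 4 * α ^ 7 / cg := by positivity
  rcases subsingleton_or_nontrivial X with hs | hn
  · have : (fun i => ∑ j, w (a i j) (x j)) = fun _ => 0 := Subsingleton.elim _ _
    rw [this]
    have e : radNorm (fun _ : Fin n => (0 : X)) = 0 := by simp [radNorm]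
    rw [e]
    positivity
  · let W : (∀ k, Matrix (Fin (nk k)) (Fin (nk k)) ℂ) →ₗ[ℂ] (X →L[ℂ] X) :=
      { toFun := w, map_add' := hadd, map_smul' := hsmul }
    have hC0 : 0 ≤ Cw := by
      have h1 := hCw 1
      rw [hone, norm_one] at h1
      have h2 : (0 : ℝ) ≤ ⨆ k, matOpNorm ((1 : ∀ k, Matrix (Fin (nk k)) (Fin (nk k)) ℂ) k) :=
        Real.iSup_nonneg fun k => norm_nonneg _
      by_contra hneg
      push Not at hneg
      nlinarith
    have hC : ∀ a, (∀ k, matOpNorm (a k) ≤ 1) → ‖W a‖ ≤ Cw := fun b hb =>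
      (hCw b).trans (mul_le_of_le_one_right hC0 (Real.iSup_le hb zero_le_one))
    have key := main_sq W hα hX hnk hmul hone hC a x
    rw [radNorm_eq, radNorm_eq]
    refine (Real.sqrt_le_sqrt key).trans ?_
    rw [Real.sqrt_mul (sq_nonneg _), Real.sqrt_sq (by positivity)]
    gcongr
    linarith

end
end
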